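/- arXiv:2506.15356 — 2 statements merged into one kernel-verified Lean document; each statement's English description precedes it below -/
import Mathlib

section
/- Integral identity for the iterated convolution S⁰_m: Let t > 0, δ ∈ (0,t), and let ℓ₁,…,ℓ_m > 0. Then ∫_{t−δ}^{t} S⁰_m(t−τ;−ℓ₁,…,−ℓ_m;−α₁,…,−α_m) dτ = ∫_D ∏_{i=1}^{m} W(−ζ_i;−α_i,1−α_i) dζ₁ ⋯ dζ_m, where D = {(ζ₁,…,ζ_m) ∈ (0,∞)^m : ∑_{k=1}^{m} (ℓ_k/ζ_k)^{1/α_k} < δ}. Equivalently, the right-hand side is the iterated integral ∫_{δ_m^m}^∞ W(−ζ_m;−α_m,1−α_m) ⋯ ∫_{δ_1^m}^∞ W(−ζ₁;−α₁,1−α₁) dζ₁ ⋯ dζ_m with lower limits δ_i^m = ℓ_i / (δ − ∑_{k=i+1}^{m} (ℓ_k/ζ_k)^{1/α_k})^{α_i}. -/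
open MeasureTheory Real Filter Set Topology intervalIntegral

/-- The Wright function `W(z; -β, δ) = ∑ z^k/(k! Γ(δ - βk))`, with `1/Γ` the
entire reciprocal Gamma function (here `Real.Gamma` vanishes at nonpositive
integers, so division gives the correct value `0`). -/
noncomputable def wrightW (β δ z : ℝ) : ℝ :=
  ∑' k : ℕ, z ^ k / (k.factorial * Real.Gamma (δ - β * k))

/-- Laplace convolution on `(0, ∞)`. -/
noncomputable def laplaceConv (f g : ℝ → ℝ) : ℝ → ℝ :=
  fun t => ∫ τ in (0:ℝ)..t, f τ * g (t - τ)

/-- Iterated Laplace convolution `h₀ ∗ h₁ ∗ ⋯ ∗ hₙ`. -/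
noncomputable def iterConv : (n : ℕ) → (Fin (n + 1) → ℝ → ℝ) → ℝ → ℝ
  | 0, h => h 0
  | n + 1, h => laplaceConv (iterConv n (fun i => h i.castSucc)) (h (Fin.last (n + 1)))

/-- `S^μ_m(t; -ℓ₁, …, -ℓ_m; -α₁, …, -α_m)` with the decomposition `μ₁ = μ`,
`μ_j = 0` for `j ≥ 2`: the Laplace convolution of
`h_j(t) = t^{μ_j - 1} W(-ℓ_j t^{-α_j}; -α_j, μ_j)`.  Indices run over
`Fin (n+1)`, i.e. the number of terms is `m = n + 1 ≥ 1`. -/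
noncomputable def Sconv (n : ℕ) (μ : ℝ) (α ℓ : Fin (n + 1) → ℝ) : ℝ → ℝ :=
  iterConv n (fun j t =>
    t ^ ((if j = 0 then μ else 0) - 1) *
      wrightW (α j) (if j = 0 then μ else 0) (-(ℓ j) * t ^ (-(α j))))

/-- `Γ^μ₁(x,t)`. -/
noncomputable def Gam1 (n : ℕ) (α lam : Fin (n + 1) → ℝ) (μ x t : ℝ) : ℝ :=
  (4 * Real.pi) ^ (-(1/2 : ℝ)) *
    ∫ p in Set.Ioi (0:ℝ),
      p ^ (-(1/2 : ℝ)) * Real.exp (-(|x| ^ 2) / (4 * p)) *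
        Sconv n μ α (fun j => lam j * p) t

/-- The kernel `E(x,t) = Γ⁰₁(x,t)`. -/
noncomputable def kerE (n : ℕ) (α lam : Fin (n + 1) → ℝ) (x t : ℝ) : ℝ :=
  Gam1 n α lam 0 x t

/-- `E_x`, the spatial derivative of `E`. -/
noncomputable def kerEx (n : ℕ) (α lam : Fin (n + 1) → ℝ) (x t : ℝ) : ℝ :=
  deriv (fun y => kerE n α lam y t) x

/-- `E_xx`, the second spatial derivative of `E`. -/
noncomputable def kerExx (n : ℕ) (α lam : Fin (n + 1) → ℝ) (x t : ℝ) : ℝ :=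
  deriv (fun y => kerEx n α lam y t) x

/-- The kernel `Z(x,t) = ∑ₖ λₖ Γ^{1-αₖ}₁(x,t)`. -/
noncomputable def kerZ (n : ℕ) (α lam : Fin (n + 1) → ℝ) (x t : ℝ) : ℝ :=
  ∑ k : Fin (n + 1), lam k * Gam1 n α lam (1 - α k) x t

/-- `Z_x`, the spatial derivative of `Z`. -/
noncomputable def kerZx (n : ℕ) (α lam : Fin (n + 1) → ℝ) (x t : ℝ) : ℝ :=
  deriv (fun y => kerZ n α lam y t) x

/-- `Z_xx`, the second spatial derivative of `Z`. -/
noncomputable def kerZxx (n : ℕ) (α lam : Fin (n + 1) → ℝ) (x t : ℝ) : ℝ :=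
  deriv (fun y => kerZx n α lam y t) x

lemma integral_rpow_mul_cexp_neg_mul_Ioi {s : ℝ} (hs : 0 < s) {r : ℂ} (hr : 0 < r.re) :
    ∫ y in Ioi (0 : ℝ), ((y ^ (s - 1) : ℝ) : ℂ) * Complex.exp (-(r * y)) =
      r ^ (-(s : ℂ)) * (Gamma s : ℝ) := by
  have hnorm : ∀ (a : ℝ) (z : ℂ), ∀ y ∈ Ioi (0 : ℝ),
      ‖((y ^ a : ℝ) : ℂ) * Complex.exp (-(z * y))‖ = y ^ a * rexp (-z.re * y ^ (1 : ℝ)) := by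
    intro a z y hy
    rw [norm_mul, Complex.norm_real, Complex.norm_exp, Real.norm_of_nonneg
      (rpow_nonneg (le_of_lt hy) _)]
    simp
  have hmeas : ∀ (a : ℝ) (z : ℂ), AEStronglyMeasurable
      (fun y : ℝ => ((y ^ a : ℝ) : ℂ) * Complex.exp (-(z * y))) (volume.restrict (Ioi 0)) := by
    intro a z
    apply Measurable.aestronglyMeasurable
    fun_prop
  have hdiff : DifferentiableOn ℂ
      (fun z : ℂ => ∫ y in Ioi (0 : ℝ), ((y ^ (s - 1) : ℝ) : ℂ) * Complex.exp (-(z * y)))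
      {z | 0 < z.re} := by
    intro z hz
    have hz : 0 < z.re := hz
    have hnhds : {w : ℂ | z.re / 2 < w.re} ∈ 𝓝 z :=
      (isOpen_lt continuous_const Complex.continuous_re).mem_nhds
        (show z.re / 2 < z.re by linarith)
    refine (hasDerivAt_integral_of_dominated_loc_of_deriv_le hnhds
      (Eventually.of_forall fun w => hmeas (s - 1) w) ?_
      (F' := fun w y => -(((y ^ s : ℝ) : ℂ) * Complex.exp (-(w * y)))) (hmeas s z).neg
      (bound := fun y => y ^ s * rexp (-(z.re / 2) * y ^ (1 : ℝ))) ?_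
      (integrableOn_rpow_mul_exp_neg_mul_rpow (by linarith) one_pos (by linarith)) ?_
      ).2.differentiableAt.differentiableWithinAt
    · have h := integrableOn_rpow_mul_exp_neg_mul_rpow (s := s - 1) (p := 1) (by linarith)
        one_pos hz
      refine h.integrable.mono' (hmeas _ _) ?_
      filter_upwards [ae_restrict_mem measurableSet_Ioi] with y hy
      exact (hnorm _ _ y hy).le
    · filter_upwards [ae_restrict_mem measurableSet_Ioi] with y hy w hw
      rw [norm_neg, hnorm _ _ y hy]
      have hy : 0 < y := hy
      have hw : z.re / 2 < w.re := hw
      simp only [rpow_one]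
      gcongr
    · filter_upwards [ae_restrict_mem measurableSet_Ioi] with y hy w hw
      have hy : 0 < y := hy
      have h1 : HasDerivAt (fun w : ℂ => -(w * y)) (-(y : ℂ)) w := by
        simpa using! ((hasDerivAt_id w).mul_const (y : ℂ)).neg
      refine (h1.cexp.const_mul _).congr_deriv ?_
      rw [show y ^ s = y ^ (s - 1) * y by rw [← rpow_add_one hy.ne', sub_add_cancel]]
      push_cast
      ring
  have hopen : IsOpen {z : ℂ | 0 < z.re} := isOpen_lt continuous_const Complex.continuous_re
  have hdiff2 : DifferentiableOn ℂ (fun z : ℂ => z ^ (-(s : ℂ)) * (Gamma s : ℝ))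
      {z | 0 < z.re} := fun z hz =>
    ((differentiableAt_id.cpow_const (Or.inl hz)).mul_const _).differentiableWithinAt
  refine (hdiff.analyticOnNhd hopen).eqOn_of_preconnected_of_frequently_eq
    (hdiff2.analyticOnNhd hopen) (convex_halfSpace_re_gt 0).isPreconnected
    (z₀ := 1) (by simp) ?_ hr
  have htend : Tendsto (fun x : ℝ => (x : ℂ)) (𝓝[≠] 1) (𝓝[≠] 1) := by
    refine tendsto_nhdsWithin_iff.2 ⟨?_, ?_⟩
    · have h : Tendsto (fun x : ℝ => (x : ℂ)) (𝓝 1) (𝓝 ((1 : ℝ) : ℂ)) :=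
        Complex.continuous_ofReal.tendsto 1
      rw [Complex.ofReal_one] at h
      exact h.mono_left nhdsWithin_le_nhds
    · filter_upwards [self_mem_nhdsWithin] with x hx
      simpa using hx
  refine htend.frequently (Eventually.frequently ?_)
  filter_upwards [nhdsWithin_le_nhds (lt_mem_nhds one_pos)] with x hx
  have h := Real.integral_rpow_mul_exp_neg_mul_Ioi hs hx
  have h2 := congrArg (fun x : ℝ => (x : ℂ)) h
  simp only [← integral_complex_ofReal] at h2
  push_cast at h2 ⊢
  rw [h2, one_div, ← Complex.ofReal_neg, ← Complex.ofReal_cpow hx.le, inv_rpow hx.le, rpow_neg hx.le]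

lemma inv_Gamma_one_sub (s : ℝ) (hs : 0 < s) :
    (Gamma (1 - s))⁻¹ = Gamma s * sin (π * s) / π := by
  have hG : Gamma s ≠ 0 := (Gamma_pos_of_pos hs).ne'
  have h : Gamma (1 - s) = π / sin (π * s) / Gamma s := by
    rw [← Real.Gamma_mul_Gamma_one_sub, mul_div_cancel_left₀ _ hG]
  rw [h, inv_div, div_div_eq_mul_div]

lemma integrableOn_rpow_mul_exp_mul_rpow_sub {α : ℝ} (h0 : 0 < α) (h1 : α < 1) {z c : ℝ}
    (hz : 0 < z) (hc : 0 < c) :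
    IntegrableOn (fun y => y ^ (α - 1) * rexp (z * y ^ α) * rexp (-(c * y))) (Ioi 0) := by
  set A := (2 * z / c) ^ (1 - α)⁻¹ with hA
  have hApos : 0 < A := by positivity
  have key : ∀ y : ℝ, 0 < y → z * y ^ α ≤ c / 2 * y + z * A ^ α := by
    intro y hy
    rcases le_total y A with h | h
    · have : y ^ α ≤ A ^ α := by gcongr
      nlinarith [mul_le_mul_of_nonneg_left this hz.le, mul_pos hc hy]
    · have h2 : 2 * z / c ≤ y ^ (1 - α) := by
        have h3 : A ^ (1 - α) ≤ y ^ (1 - α) := by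
          have : 0 < 1 - α := by linarith
          gcongr
        rwa [hA, rpow_inv_rpow (by positivity) (by linarith)] at h3
      have h4 : y = y ^ (1 - α) * y ^ α := by
        rw [← rpow_add hy, sub_add_cancel, rpow_one]
      have h5 : z ≤ c / 2 * y ^ (1 - α) := by
        rw [div_le_iff₀ hc] at h2
        linarith
      have h6 : z * y ^ α ≤ c / 2 * y := by
        calc z * y ^ α ≤ c / 2 * y ^ (1 - α) * y ^ α := by gcongr
          _ = c / 2 * (y ^ (1 - α) * y ^ α) := by ring
          _ = _ := by rw [← h4]
      have : 0 ≤ z * A ^ α := by positivity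
      linarith
  have hint := (integrableOn_rpow_mul_exp_neg_mul_rpow (s := α - 1) (p := 1) (b := c / 2)
    (by linarith) one_pos (by linarith)).integrable.const_mul (rexp (z * A ^ α))
  refine hint.mono' (Measurable.aestronglyMeasurable (by fun_prop)) ?_
  filter_upwards [ae_restrict_mem measurableSet_Ioi] with y hy
  have hy : 0 < y := hy
  rw [Real.norm_of_nonneg (by positivity), mul_assoc, ← Real.exp_add, rpow_one, mul_left_comm,
    ← Real.exp_add]
  have h := key y hy
  exact mul_le_mul_of_nonneg_left (Real.exp_le_exp.2 (by linarith)) (by positivity)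

/-- Termwise integration of a rotated Hankel-type integral. -/
lemma wright_hasSum_integral {α : ℝ} (h0 : 0 < α) (h1 : α < 1) {z : ℝ} (hz : 0 < z)
    {q r : ℂ} (hq : ‖q‖ = 1) (hr : 0 < r.re) :
    HasSum (fun k : ℕ => (-z) ^ k / (k.factorial : ℂ) * q ^ (k + 1) *
        (r ^ (-((α * (k + 1) : ℝ) : ℂ)) * (Gamma (α * (k + 1)) : ℝ)))
      (∫ y in Ioi (0 : ℝ), q * ((y ^ (α - 1) : ℝ) : ℂ) * Complex.exp (-(r * y)) *
        Complex.exp (-(z * q * ((y ^ α : ℝ) : ℂ)))) := by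
  have hbound : ∀ y ∈ Ioi (0 : ℝ), HasSum (fun k : ℕ => y ^ (α - 1) * rexp (-(r.re * y)) *
      ((z * y ^ α) ^ k / k.factorial))
      (y ^ (α - 1) * rexp (-(r.re * y)) * rexp (z * y ^ α)) := fun y _ => by
    rw [Real.exp_eq_exp_ℝ]
    exact (NormedSpace.expSeries_div_hasSum_exp (z * y ^ α)).mul_left _
  have hpow : ∀ y ∈ Ioi (0 : ℝ), ∀ k : ℕ,
      y ^ (α * (k + 1) - 1) = y ^ (α - 1) * (y ^ α) ^ k := fun y hy k => by
    have hy : 0 < y := hy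
    rw [← rpow_natCast, ← rpow_mul hy.le, ← rpow_add hy]
    ring_nf
  have main := MeasureTheory.hasSum_integral_of_dominated_convergence
    (μ := volume.restrict (Ioi (0 : ℝ)))
    (F := fun (k : ℕ) (y : ℝ) => (-z) ^ k / (k.factorial : ℂ) * q ^ (k + 1) *
      (((y ^ (α * (k + 1) - 1) : ℝ) : ℂ) * Complex.exp (-(r * y))))
    (f := fun y : ℝ => q * ((y ^ (α - 1) : ℝ) : ℂ) * Complex.exp (-(r * y)) *
        Complex.exp (-(z * q * ((y ^ α : ℝ) : ℂ))))
    (fun k y => y ^ (α - 1) * rexp (-(r.re * y)) * ((z * y ^ α) ^ k / k.factorial))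
    (fun k => Measurable.aestronglyMeasurable (by fun_prop)) ?_ ?_ ?_ ?_
  · refine main.congr_fun ?_
    intro k
    rw [MeasureTheory.integral_const_mul, integral_rpow_mul_cexp_neg_mul_Ioi (by positivity) hr]
  · intro k
    filter_upwards [ae_restrict_mem measurableSet_Ioi] with y hy
    have hy' : 0 < y := hy
    rw [hpow y hy k]
    simp only [norm_mul, norm_div, norm_pow, norm_neg, hq, Complex.norm_real, Complex.norm_exp,
      Complex.norm_natCast, Real.norm_of_nonneg hz.le,
      Real.norm_of_nonneg (rpow_nonneg hy'.le _), one_pow, mul_one]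
    refine le_of_eq ?_
    simp
    ring
  · filter_upwards [ae_restrict_mem measurableSet_Ioi] with y hy
    exact (hbound y hy).summable
  · refine (integrableOn_rpow_mul_exp_mul_rpow_sub h0 h1 hz hr).integrable.congr ?_
    filter_upwards [ae_restrict_mem measurableSet_Ioi] with y hy
    rw [(hbound y hy).tsum_eq]
    ring
  · filter_upwards [ae_restrict_mem measurableSet_Ioi] with y hy
    have h := (NormedSpace.expSeries_div_hasSum_exp (-(z * q * ((y ^ α : ℝ) : ℂ)))).mul_left
      (q * ((y ^ (α - 1) : ℝ) : ℂ) * Complex.exp (-(r * y)))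
    rw [← Complex.exp_eq_exp_ℂ] at h
    refine h.congr_fun fun k => ?_
    rw [hpow y hy k]
    push_cast
    ring

/-- Mainardi's function as the imaginary part of a rotated Hankel-type integral. -/
lemma wrightW_one_sub_eq_im {α : ℝ} (h0 : 0 < α) (h1 : α < 1) {z : ℝ} (hz : 0 < z)
    {ψ φ : ℝ} (hφ0 : -(π / 2) < φ) (hφ1 : φ < π / 2) (hψ : ψ + α * φ = π * α) :
    wrightW α (1 - α) (-z) = π⁻¹ * (∫ y in Ioi (0 : ℝ), Complex.exp (ψ * Complex.I) *
      ((y ^ (α - 1) : ℝ) : ℂ) * Complex.exp (-(Complex.exp (-φ * Complex.I) * y)) *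
        Complex.exp (-(z * Complex.exp (ψ * Complex.I) * ((y ^ α : ℝ) : ℂ)))).im := by
  have hr : 0 < (Complex.exp (-φ * Complex.I)).re := by
    rw [← Complex.ofReal_neg, Complex.exp_ofReal_mul_I_re, Real.cos_neg]
    exact cos_pos_of_mem_Ioo ⟨hφ0, hφ1⟩
  have hsum := ((Complex.hasSum_iff _ _).1 (wright_hasSum_integral h0 h1 hz
    (Complex.norm_exp_ofReal_mul_I ψ) hr)).2.mul_left π⁻¹
  rw [← hsum.tsum_eq, wrightW]
  refine tsum_congr fun k => ?_
  have hs : 0 < α * (k + 1) := by positivity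
  have hexp : Complex.exp (ψ * Complex.I) ^ (k + 1) *
      Complex.exp (-φ * Complex.I) ^ (-((α * (k + 1) : ℝ) : ℂ)) =
      Complex.exp ((π * (α * (k + 1)) : ℝ) * Complex.I) := by
    rw [Complex.cpow_def_of_ne_zero (Complex.exp_ne_zero _), Complex.log_exp, ← Complex.exp_nat_mul,
      ← Complex.exp_add]
    · congr 1
      have : (ψ : ℂ) + α * φ = π * α := by exact_mod_cast hψ
      push_cast
      linear_combination (k + 1) * Complex.I * this
    · simp
      linarith [pi_pos]
    · simp
      linarith [pi_pos]
  have hterm : (-z : ℂ) ^ k / (k.factorial : ℂ) * Complex.exp (ψ * Complex.I) ^ (k + 1) *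
      (Complex.exp (-φ * Complex.I) ^ (-((α * (k + 1) : ℝ) : ℂ)) * (Gamma (α * (k + 1)) : ℝ)) =
      ((-z) ^ k / k.factorial * Gamma (α * (k + 1)) : ℝ) *
        Complex.exp ((π * (α * (k + 1)) : ℝ) * Complex.I) := by
    rw [← hexp]
    push_cast
    ring
  rw [hterm, Complex.im_ofReal_mul, Complex.exp_ofReal_mul_I_im,
    show 1 - α - α * k = 1 - α * (k + 1) by ring, ← div_div, div_eq_mul_inv _ (Gamma _),
    inv_Gamma_one_sub _ hs]
  ring

lemma norm_cexp_neg_sub_one_le {w : ℂ} (hw : 0 ≤ w.re) :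
    ‖Complex.exp (-w) - 1‖ ≤ 2 * ‖w‖ := by
  rcases le_total ‖w‖ 1 with h | h
  · simpa using Complex.norm_exp_sub_one_le (x := -w) (by simpa using h)
  · have h2 : ‖Complex.exp (-w)‖ ≤ 1 := by
      rw [Complex.norm_exp]
      simpa using hw
    calc _ ≤ ‖Complex.exp (-w)‖ + ‖(1 : ℂ)‖ := norm_sub_le _ _
      _ ≤ 2 * ‖w‖ := by
        rw [norm_one]
        linarith

lemma measurable_wrightW_one_sub {α : ℝ} (h0 : 0 < α) (h1 : α < 1) :
    ∃ N : ℝ → ℝ, Measurable N ∧ ∀ z > 0, wrightW α (1 - α) (-z) = N z := by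
  refine ⟨_, ?_, fun z hz => wrightW_one_sub_eq_im h0 h1 hz (ψ := π * α) (φ := 0)
    (by linarith [pi_pos]) (by linarith [pi_pos]) (by ring)⟩
  refine (Complex.measurable_im.comp (StronglyMeasurable.measurable
    (StronglyMeasurable.integral_prod_right (Measurable.stronglyMeasurable ?_)))).const_mul _
  unfold Function.uncurry
  fun_prop

lemma abs_wrightW_one_sub_le {α : ℝ} (h0 : 0 < α) (h1 : α < 1) :
    ∃ C, ∀ z > 0, |wrightW α (1 - α) (-z)| ≤ C * z ^ (-(α⁻¹ + 1)) := by
  set φ := π * α / 2 with hφ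
  set ψ := π * α * (2 - α) / 2 with hψ
  have hpi := pi_pos
  have hπα : 0 < π * α := by positivity
  have hφ1 : φ < π / 2 := by nlinarith
  have hψ1 : ψ < π / 2 := by nlinarith [mul_pos hpi (pow_pos (sub_pos.2 h1) 2)]
  have hψ0 : 0 < ψ := by nlinarith
  set q := Complex.exp (ψ * Complex.I) with hq
  set r := Complex.exp (-φ * Complex.I) with hr
  have hq1 : ‖q‖ = 1 := Complex.norm_exp_ofReal_mul_I ψ
  have hr1 : ‖r‖ = 1 := by
    rw [hr, ← Complex.ofReal_neg]
    exact Complex.norm_exp_ofReal_mul_I _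
  have hrre : 0 < r.re := by
    rw [hr, ← Complex.ofReal_neg, Complex.exp_ofReal_mul_I_re, Real.cos_neg]
    exact cos_pos_of_mem_Ioo ⟨by linarith, hφ1⟩
  have hqre : 0 < q.re := by
    rw [hq, Complex.exp_ofReal_mul_I_re]
    exact cos_pos_of_mem_Ioo ⟨by linarith, hψ1⟩
  have hq0 : q ≠ 0 := Complex.exp_ne_zero _
  refine ⟨π⁻¹ * (α⁻¹ * (2 * ((1 / q.re) ^ (α⁻¹ + 1) * Gamma (α⁻¹ + 1)))), fun z hz => ?_⟩
  have hzq : (-(z * q)).re < 0 := by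
    rw [Complex.neg_re, Complex.re_ofReal_mul]
    nlinarith
  have hsubst : ∫ y in Ioi (0 : ℝ), q * ((y ^ (α - 1) : ℝ) : ℂ) * Complex.exp (-(r * y)) *
        Complex.exp (-(z * q * ((y ^ α : ℝ) : ℂ))) =
      (α⁻¹ : ℝ) * ∫ u in Ioi (0 : ℝ), q * Complex.exp (-(r * ((u ^ α⁻¹ : ℝ) : ℂ))) *
        Complex.exp (-(z * q) * u) := by
    rw [← integral_comp_rpow_Ioi (fun u : ℝ => q * Complex.exp (-(r * ((u ^ α⁻¹ : ℝ) : ℂ))) *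
      Complex.exp (-(z * q) * u)) h0.ne', ← MeasureTheory.integral_const_mul]
    refine setIntegral_congr_fun measurableSet_Ioi fun y hy => ?_
    have hy : 0 < y := hy
    rw [rpow_rpow_inv hy.le h0.ne', abs_of_pos h0, Complex.real_smul]
    have : (α : ℂ) ≠ 0 := by exact_mod_cast h0.ne'
    push_cast
    field_simp
  have hone : ∫ u in Ioi (0 : ℝ), q * Complex.exp (-(z * q) * u) = ((z⁻¹ : ℝ) : ℂ) := by
    rw [MeasureTheory.integral_const_mul, integral_exp_mul_complex_Ioi hzq]
    have : (z : ℂ) ≠ 0 := by exact_mod_cast hz.ne'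
    simp
    field_simp
  have hnexp : ∀ u : ℝ, ‖Complex.exp (-(z * q) * u)‖ = rexp (-(z * q.re * u)) := fun u => by
    rw [Complex.norm_exp, Complex.re_mul_ofReal, Complex.neg_re, Complex.re_ofReal_mul, neg_mul]
  have hint1 : IntegrableOn (fun u : ℝ => q * Complex.exp (-(z * q) * u)) (Ioi 0) :=
    (integrableOn_exp_mul_complex_Ioi hzq 0).integrable.const_mul q
  have hrpos : ∀ u ∈ Ioi (0 : ℝ), 0 ≤ (r * ((u ^ α⁻¹ : ℝ) : ℂ)).re := fun u hu => by
    rw [Complex.re_mul_ofReal]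
    exact mul_nonneg hrre.le (rpow_nonneg (le_of_lt hu) _)
  have hint2 : IntegrableOn (fun u : ℝ => q * Complex.exp (-(r * ((u ^ α⁻¹ : ℝ) : ℂ))) *
        Complex.exp (-(z * q) * u)) (Ioi 0) := by
    refine hint1.integrable.norm.mono' (Measurable.aestronglyMeasurable (by fun_prop)) ?_
    filter_upwards [ae_restrict_mem measurableSet_Ioi] with u hu
    have : ‖Complex.exp (-(r * ((u ^ α⁻¹ : ℝ) : ℂ)))‖ ≤ 1 := by
      rw [Complex.norm_exp]
      simpa only [Real.exp_le_one_iff, Complex.neg_re, neg_nonpos] using hrpos u hu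
    rw [norm_mul, norm_mul, norm_mul]
    gcongr
    exact mul_le_of_le_one_right (norm_nonneg _) this
  have him : (∫ u in Ioi (0 : ℝ), q * Complex.exp (-(r * ((u ^ α⁻¹ : ℝ) : ℂ))) *
        Complex.exp (-(z * q) * u)).im =
      (∫ u in Ioi (0 : ℝ), (q * Complex.exp (-(r * ((u ^ α⁻¹ : ℝ) : ℂ))) *
        Complex.exp (-(z * q) * u) - q * Complex.exp (-(z * q) * u))).im := by
    rw [MeasureTheory.integral_sub hint2 hint1, hone, Complex.sub_im, Complex.ofReal_im, sub_zero]
  have hbd : ‖∫ u in Ioi (0 : ℝ), (q * Complex.exp (-(r * ((u ^ α⁻¹ : ℝ) : ℂ))) *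
        Complex.exp (-(z * q) * u) - q * Complex.exp (-(z * q) * u))‖ ≤
      2 * ((1 / (z * q.re)) ^ (α⁻¹ + 1) * Gamma (α⁻¹ + 1)) := by
    rw [← Real.integral_rpow_mul_exp_neg_mul_Ioi (by positivity) (by positivity),
      ← MeasureTheory.integral_const_mul]
    refine norm_integral_le_of_norm_le ?_ ?_
    · have h := integrableOn_rpow_mul_exp_neg_mul_rpow (s := α⁻¹ + 1 - 1) (p := 1)
        (b := z * q.re) (by rw [add_sub_cancel_right]; linarith [inv_pos.2 h0]) one_pos
        (by positivity)
      simp only [rpow_one, neg_mul] at h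
      exact h.integrable.const_mul 2
    · filter_upwards [ae_restrict_mem measurableSet_Ioi] with u hu
      have hu' : 0 < u := hu
      have h := norm_cexp_neg_sub_one_le (hrpos u hu)
      rw [norm_mul, hr1, one_mul, Complex.norm_real,
        Real.norm_of_nonneg (rpow_nonneg hu'.le _)] at h
      rw [show ∀ a b : ℂ, q * a * b - q * b = q * (a - 1) * b by intros; ring, norm_mul,
        norm_mul, hq1, one_mul, hnexp, add_sub_cancel_right, ← mul_assoc]
      gcongr
  rw [wrightW_one_sub_eq_im h0 h1 hz (ψ := ψ) (φ := φ) (by linarith) hφ1 (by rw [hψ, hφ]; ring),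
    hsubst, Complex.im_ofReal_mul, him, abs_mul, abs_mul, abs_of_pos (inv_pos.2 hpi),
    abs_of_pos (inv_pos.2 h0)]
  refine (mul_le_mul_of_nonneg_left (mul_le_mul_of_nonneg_left
    ((Complex.abs_im_le_norm _).trans hbd) (inv_pos.2 h0).le) (inv_pos.2 hpi).le).trans
    (le_of_eq ?_)
  rw [one_div, one_div, mul_inv, mul_rpow (by positivity) (by positivity), inv_rpow hz.le,
    rpow_neg hz.le]
  ring

lemma wrightW_zero_eq {α : ℝ} (h0 : 0 < α) (z : ℝ) :
    wrightW α 0 z = -α * z * wrightW α (1 - α) z := by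
  rw [wrightW, wrightW, ← tsum_mul_left, ← (Nat.succ_injective).tsum_eq]
  · refine tsum_congr fun k => ?_
    have hG : Gamma (1 - α - α * k) = -(α * (k + 1)) * Gamma (0 - α * (k + 1)) := by
      have : -(α * ((k : ℝ) + 1)) ≠ 0 := neg_ne_zero.2 (by positivity)
      rw [zero_sub, ← Real.Gamma_add_one this]
      ring_nf
    rw [hG, Nat.succ_eq_add_one, Nat.factorial_succ]
    have hk : ((k : ℝ) + 1) ≠ 0 := by positivity
    push_cast
    by_cases h : Gamma (0 - α * (k + 1)) = 0
    · rw [h]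
      simp
    · generalize Gamma (0 - α * (k + 1)) = G at h ⊢
      field_simp
      ring
  · intro k hk
    cases k with
    | zero => simp at hk
    | succ k => exact ⟨k, rfl⟩

/-- Iterated convolution `f₀ ∗ f₁ ∗ ⋯ ∗ fₙ` of functions supported on `(0, ∞)`. -/
noncomputable def iteratedPosConvolution : (n : ℕ) → (Fin (n + 1) → ℝ → ℝ) → ℝ → ℝ
  | 0, f => f 0
  | n + 1, f => posConvolution (iteratedPosConvolution n fun i => f i.castSucc)
      (f (Fin.last (n + 1))) (ContinuousLinearMap.mul ℝ ℝ)

lemma integral_posConvolution_mul {f g : ℝ → ℝ} (hf : Integrable f) (hg : Integrable g)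
    (hf0 : ∀ x ≤ 0, f x = 0) (hg0 : ∀ x ≤ 0, g x = 0)
    {φ : ℝ → ℝ} (hφ : Measurable φ) {C : ℝ} (hC : ∀ x, ‖φ x‖ ≤ C) :
    ∫ x, posConvolution f g (ContinuousLinearMap.mul ℝ ℝ) volume x * φ x =
      ∫ r, g r * ∫ s, f s * φ (s + r) := by
  have hi : ∀ h : ℝ → ℝ, (∀ x ≤ 0, h x = 0) → (Ioi 0).indicator h = h := fun h hh => by
    rw [Set.indicator_eq_self]
    intro x hx
    by_contra hx'
    exact hx (hh x (not_lt.mp hx'))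
  have hint : Integrable (fun p : ℝ × ℝ => f p.2 * g (p.1 - p.2) * φ p.1)
      (volume.prod volume) := by
    have h := Integrable.convolution_integrand (ContinuousLinearMap.mul ℝ ℝ) hf hg
      (μ := volume) (ν := volume)
    exact h.mul_bdd (c := C) (hφ.comp measurable_fst).aestronglyMeasurable
      (ae_of_all _ fun x => hC _)
  have hint2 : Integrable (fun p : ℝ × ℝ => f p.1 * (g p.2 * φ (p.1 + p.2)))
      (volume.prod volume) := by
    have h := (hf.mul_prod hg).mul_bdd (c := C) (g := fun p => φ (p.1 + p.2))
      (Measurable.aestronglyMeasurable (by fun_prop))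
      (ae_of_all _ fun x => hC _)
    simpa only [mul_assoc] using h
  rw [posConvolution_eq_convolution_indicator (ν := volume), hi f hf0, hi g hg0]
  calc _ = ∫ x, ∫ s, f s * g (x - s) * φ x := by
        simp_rw [convolution, ← MeasureTheory.integral_mul_const, ContinuousLinearMap.mul_apply']
    _ = ∫ s, ∫ x, f s * g (x - s) * φ x := integral_integral_swap hint
    _ = ∫ s, ∫ r, f s * (g r * φ (s + r)) := by
        congr 1
        ext s
        rw [← integral_sub_right_eq_self (fun r => f s * (g r * φ (s + r))) s]
        congr 1
        ext x
        rw [add_sub_cancel, mul_assoc]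
    _ = ∫ r, ∫ s, f s * (g r * φ (s + r)) := integral_integral_swap hint2
    _ = _ := by
        simp_rw [← MeasureTheory.integral_const_mul, mul_left_comm]

lemma iteratedPosConvolution_eq_zero (n : ℕ) (f : Fin (n + 1) → ℝ → ℝ)
    (hf0 : ∀ i, ∀ x ≤ 0, f i x = 0) {x : ℝ} (hx : x ≤ 0) :
    iteratedPosConvolution n f x = 0 := by
  cases n with
  | zero => exact hf0 0 x hx
  | succ n =>
    simp only [iteratedPosConvolution, posConvolution]
    exact Set.indicator_of_notMem (notMem_Ioi.2 hx) _

lemma integrable_iteratedPosConvolution (n : ℕ) (f : Fin (n + 1) → ℝ → ℝ)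
    (hf : ∀ i, Integrable (f i)) : Integrable (iteratedPosConvolution n f) := by
  induction n with
  | zero => exact hf 0
  | succ n ih =>
    exact integrable_posConvolution (ih _ fun i => hf _).integrableOn (hf _).integrableOn _

lemma integral_iteratedPosConvolution_mul (n : ℕ) (f M T : Fin (n + 1) → ℝ → ℝ)
    (hf : ∀ i, Integrable (f i)) (hM : ∀ i, Integrable (M i)) (hT : ∀ i, Measurable (T i))
    (hf0 : ∀ i, ∀ x ≤ 0, f i x = 0)
    (h : ∀ i, ∀ φ : ℝ → ℝ, ∫ x, f i x * φ x = ∫ z, M i z * φ (T i z))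
    {φ : ℝ → ℝ} (hφ : Measurable φ) {C : ℝ} (hC : ∀ x, ‖φ x‖ ≤ C) :
    ∫ x, iteratedPosConvolution n f x * φ x =
      ∫ ζ : Fin (n + 1) → ℝ, (∏ i, M i (ζ i)) * φ (∑ i, T i (ζ i)) := by
  induction n generalizing φ with
  | zero =>
    have e := (volume_preserving_funUnique (Fin 1) ℝ).integral_comp'
      (fun z => M 0 z * φ (T 0 z))
    refine (h 0 φ).trans (e.symm.trans ?_)
    congr 1
    ext ζ
    simp [MeasurableEquiv.funUnique]
  | succ n ih =>
    have e := (volume_preserving_piFinSuccAbove (fun _ : Fin (n + 2) => ℝ)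
      (Fin.last (n + 1))).integral_comp'
      (fun p => (M (Fin.last (n + 1)) p.1 * ∏ i : Fin (n + 1), M i.castSucc (p.2 i)) *
        φ (∑ i : Fin (n + 1), T i.castSucc (p.2 i) + T (Fin.last (n + 1)) p.1))
    have hint : Integrable (fun p : ℝ × (Fin (n + 1) → ℝ) =>
        (M (Fin.last (n + 1)) p.1 * ∏ i : Fin (n + 1), M i.castSucc (p.2 i)) *
        φ (∑ i : Fin (n + 1), T i.castSucc (p.2 i) + T (Fin.last (n + 1)) p.1))
        (volume.prod volume) := by
      refine ((hM _).mul_prod (Integrable.fintype_prod fun i : Fin (n + 1) => hM i.castSucc)).mul_bdd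
        (c := C) (Measurable.aestronglyMeasurable ?_) (ae_of_all _ fun x => hC _)
      have := fun i => hT i
      fun_prop
    calc _ = ∫ r, f (Fin.last (n + 1)) r *
          ∫ s, iteratedPosConvolution n (fun i => f i.castSucc) s * φ (s + r) :=
          integral_posConvolution_mul
            (integrable_iteratedPosConvolution n _ fun i => hf _) (hf _)
            (fun x hx => iteratedPosConvolution_eq_zero n _ (fun i => hf0 _) hx) (hf0 _) hφ hC
      _ = ∫ r, f (Fin.last (n + 1)) r * ∫ ζ : Fin (n + 1) → ℝ,
            (∏ i, M i.castSucc (ζ i)) * φ (∑ i, T i.castSucc (ζ i) + r) := by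
          congr 1
          ext r
          rw [ih (fun i => f i.castSucc) (fun i => M i.castSucc) (fun i => T i.castSucc)
            (fun i => hf _) (fun i => hM _) (fun i => hT _) (fun i => hf0 _) (fun i => h _)
            (φ := fun s => φ (s + r)) (by fun_prop) fun x => hC _]
      _ = _ := by
          rw [h _ fun r => ∫ ζ : Fin (n + 1) → ℝ,
            (∏ i, M i.castSucc (ζ i)) * φ (∑ i, T i.castSucc (ζ i) + r)]
          simp_rw [← MeasureTheory.integral_const_mul, ← mul_assoc]
          rw [← integral_prod _ hint]
          refine e.symm.trans ?_
          congr 1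
          ext ζ
          simp only [MeasurableEquiv.piFinSuccAbove_apply, Fin.insertNthEquiv, 
            Fin.prod_univ_castSucc, Fin.sum_univ_castSucc, Equiv.coe_fn_symm_mk,
            Fin.removeNth, Fin.succAbove_last]
          ring_nf

section

variable {α ℓ δ : ℝ}

lemma inv_mul_wrightW_zero_eq (h0 : 0 < α) {s : ℝ} (hs : 0 < s) :
    s ^ (-1 : ℝ) * wrightW α 0 (-ℓ * s ^ (-α)) =
      α * ℓ * s ^ (-α - 1) * wrightW α (1 - α) (-(ℓ * s ^ (-α))) := by
  rw [wrightW_zero_eq h0, neg_mul ℓ, sub_eq_add_neg (-α), rpow_add hs]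
  ring

lemma integrable_indicator_inv_mul_wrightW_zero (h0 : 0 < α) (h1 : α < 1) (hℓ : 0 < ℓ) :
    Integrable ((Ioo 0 δ).indicator
      fun s => s ^ (-1 : ℝ) * wrightW α 0 (-ℓ * s ^ (-α))) := by
  rw [integrable_indicator_iff measurableSet_Ioo]
  obtain ⟨N, hN, hWN⟩ := measurable_wrightW_one_sub h0 h1
  obtain ⟨C, hC⟩ := abs_wrightW_one_sub_le h0 h1
  refine IntegrableOn.of_bound measure_Ioo_lt_top ?_ (α * ℓ * (C * ℓ ^ (-(α⁻¹ + 1)))) ?_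
  · have hmeas : Measurable fun s : ℝ => α * ℓ * s ^ (-α - 1) * N (ℓ * s ^ (-α)) := by fun_prop
    refine hmeas.aestronglyMeasurable.congr ?_
    filter_upwards [ae_restrict_mem measurableSet_Ioo] with s hs
    have hs0 : 0 < s := hs.1
    rw [inv_mul_wrightW_zero_eq h0 hs.1, hWN _ (by positivity)]
  · filter_upwards [ae_restrict_mem measurableSet_Ioo] with s hs
    have hs0 : 0 < s := hs.1
    have hpow : s ^ (-α - 1) * (s ^ (-α)) ^ (-(α⁻¹ + 1)) = 1 := by
      rw [← rpow_mul hs0.le, ← rpow_add hs0]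
      have : -α - 1 + -α * -(α⁻¹ + 1) = 0 := by
        field_simp
        ring
      rw [this, rpow_zero]
    rw [inv_mul_wrightW_zero_eq h0 hs.1, norm_mul, Real.norm_of_nonneg (by positivity),
      Real.norm_eq_abs]
    calc _ ≤ α * ℓ * s ^ (-α - 1) * (C * (ℓ * s ^ (-α)) ^ (-(α⁻¹ + 1))) := by
          gcongr
          exact hC _ (by positivity)
      _ = α * ℓ * (C * ℓ ^ (-(α⁻¹ + 1))) *
          (s ^ (-α - 1) * (s ^ (-α)) ^ (-(α⁻¹ + 1))) := by
          rw [mul_rpow hℓ.le (by positivity)]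
          ring
      _ = _ := by rw [hpow, mul_one]

lemma measurableSet_div_rpow_lt :
    MeasurableSet {z : ℝ | 0 < z ∧ (ℓ / z) ^ α⁻¹ < δ} :=
  measurableSet_Ioi.inter (measurableSet_lt (f := fun z : ℝ => (ℓ / z) ^ α⁻¹) (g := fun _ => δ)
    (by fun_prop) measurable_const)

lemma integrable_indicator_wrightW_one_sub (h0 : 0 < α) (h1 : α < 1) (hℓ : 0 < ℓ)
    (hδ : 0 < δ) :
    Integrable ({z : ℝ | 0 < z ∧ (ℓ / z) ^ α⁻¹ < δ}.indicator
      fun z => wrightW α (1 - α) (-z)) := by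
  rw [integrable_indicator_iff measurableSet_div_rpow_lt]
  obtain ⟨N, hN, hWN⟩ := measurable_wrightW_one_sub h0 h1
  obtain ⟨C, hC⟩ := abs_wrightW_one_sub_le h0 h1
  have hsub : {z : ℝ | 0 < z ∧ (ℓ / z) ^ α⁻¹ < δ} ⊆ Ioi (ℓ / δ ^ α) := by
    rintro z ⟨hz, hlt⟩
    have h := rpow_lt_rpow (by positivity) hlt h0
    rw [rpow_inv_rpow (by positivity) h0.ne'] at h
    rw [mem_Ioi, div_lt_comm₀ (by positivity) hz]
    exact h
  have hint := (integrableOn_Ioi_rpow_of_lt (a := -(α⁻¹ + 1)) (c := ℓ / δ ^ α)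
    (by linarith [inv_pos.2 h0]) (by positivity)).mono_set hsub
  refine (hint.integrable.const_mul C).mono' ?_ ?_
  · refine hN.aestronglyMeasurable.congr ?_
    filter_upwards [ae_restrict_mem measurableSet_div_rpow_lt] with z hz
    exact (hWN z hz.1).symm
  · filter_upwards [ae_restrict_mem measurableSet_div_rpow_lt] with z hz
    exact hC z hz.1

lemma integral_indicator_inv_mul_wrightW_zero_mul (h0 : 0 < α) (hℓ : 0 < ℓ) (φ : ℝ → ℝ) :
    ∫ s, (Ioo 0 δ).indicator (fun s => s ^ (-1 : ℝ) * wrightW α 0 (-ℓ * s ^ (-α))) s * φ s =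
      ∫ z, {z : ℝ | 0 < z ∧ (ℓ / z) ^ α⁻¹ < δ}.indicator
        (fun z => wrightW α (1 - α) (-z)) z * φ ((ℓ / z) ^ α⁻¹) := by
  set G : ℝ → ℝ := fun z => {z : ℝ | 0 < z ∧ (ℓ / z) ^ α⁻¹ < δ}.indicator
        (fun z => wrightW α (1 - α) (-z)) z * φ ((ℓ / z) ^ α⁻¹) with hG
  have hG0 : ∫ z, G z = ∫ z in Ioi (0 : ℝ), G z := by
    refine (setIntegral_eq_integral_of_forall_compl_eq_zero fun z hz => ?_).symm
    simp only [hG]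
    rw [indicator_of_notMem fun h => hz h.1, zero_mul]
  have hf0 : ∀ f : ℝ → ℝ, ∫ s, (Ioo 0 δ).indicator f s * φ s =
      ∫ s in Ioi (0 : ℝ), (Ioo 0 δ).indicator f s * φ s := fun f => by
    refine (setIntegral_eq_integral_of_forall_compl_eq_zero fun z hz => ?_).symm
    rw [indicator_of_notMem fun h => hz h.1, zero_mul]
  have hscale := integral_comp_mul_left_Ioi G 0 hℓ
  rw [mul_zero, eq_inv_smul_iff₀ hℓ.ne'] at hscale
  rw [hG0, hf0, ← hscale, ← integral_comp_rpow_Ioi (fun x => G (ℓ * x)) (neg_ne_zero.2 h0.ne'),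
    smul_eq_mul, ← MeasureTheory.integral_const_mul]
  refine setIntegral_congr_fun measurableSet_Ioi fun s hs => ?_
  have hs : 0 < s := hs
  have hT : (ℓ / (ℓ * s ^ (-α))) ^ α⁻¹ = s := by
    rw [div_mul_cancel_left₀ hℓ.ne', rpow_neg hs.le, inv_inv, rpow_rpow_inv hs.le h0.ne']
  simp only [hG, hT, smul_eq_mul, abs_neg, abs_of_pos h0]
  by_cases hsδ : s < δ
  · rw [indicator_of_mem (show s ∈ Ioo 0 δ from ⟨hs, hsδ⟩), indicator_of_mem,
      inv_mul_wrightW_zero_eq h0 hs]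
    · ring
    · exact ⟨by positivity, by rwa [hT]⟩
  · rw [indicator_of_notMem fun h => hsδ h.2, indicator_of_notMem]
    · simp
    · rintro ⟨-, h⟩
      rw [hT] at h
      exact hsδ h

end

lemma iterConv_eq_iteratedPosConvolution (n : ℕ) (h : Fin (n + 1) → ℝ → ℝ) {δ t : ℝ}
    (ht : t ∈ Ioo 0 δ) :
    iterConv n h t = iteratedPosConvolution n (fun i => (Ioo 0 δ).indicator (h i)) t := by
  induction n generalizing t with
  | zero => exact (indicator_of_mem ht _).symm
  | succ n ih =>
    simp only [iterConv, laplaceConv, iteratedPosConvolution, posConvolution]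
    rw [indicator_of_mem (show t ∈ Ioi 0 from ht.1), integral_of_le ht.1.le,
      integral_of_le ht.1.le, integral_Ioc_eq_integral_Ioo, integral_Ioc_eq_integral_Ioo]
    refine setIntegral_congr_fun measurableSet_Ioo fun s hs => ?_
    have h1 : s ∈ Ioo 0 δ := ⟨hs.1, hs.2.trans ht.2⟩
    have h2 : t - s ∈ Ioo 0 δ := ⟨sub_pos.2 hs.2, by linarith [hs.1, ht.2]⟩
    simp only [ContinuousLinearMap.mul_apply']
    rw [ih _ h1, indicator_of_mem h2]

/-- Integral identity for the iterated convolution `S⁰_m`: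
`∫_{t-δ}^t S⁰_m(t-τ; -ℓ₁,…,-ℓ_m; -α₁,…,-α_m) dτ` equals the integral of
`∏ᵢ W(-ζᵢ; -αᵢ, 1-αᵢ)` over the region
`D = {ζ ∈ (0,∞)^m : ∑ₖ (ℓₖ/ζₖ)^{1/αₖ} < δ}`. -/
theorem Sconv_integral_identity
    (m : ℕ) (α : Fin (m + 1) → ℝ)
    (hmono : StrictMono α) (hpos : ∀ j, 0 < α j) (hlt1 : ∀ j, α j < 1)
    (ℓ : Fin (m + 1) → ℝ) (hℓ : ∀ j, 0 < ℓ j)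
    (t δ : ℝ) (ht : 0 < t) (hδ : δ ∈ Set.Ioo 0 t) :
    ∫ τ in (t - δ)..t, Sconv m 0 α ℓ (t - τ) =
      ∫ ζ in {ζ : Fin (m + 1) → ℝ |
          (∀ i, 0 < ζ i) ∧ ∑ k, (ℓ k / ζ k) ^ (α k)⁻¹ < δ},
        ∏ i, wrightW (α i) (1 - α i) (-(ζ i)) := by
  have hδ0 : 0 < δ := hδ.1
  set f : Fin (m + 1) → ℝ → ℝ := fun j => (Ioo 0 δ).indicator
    fun s => s ^ (-1 : ℝ) * wrightW (α j) 0 (-(ℓ j) * s ^ (-(α j))) with hf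
  set M : Fin (m + 1) → ℝ → ℝ := fun j => {z : ℝ | 0 < z ∧ (ℓ j / z) ^ (α j)⁻¹ < δ}.indicator
    fun z => wrightW (α j) (1 - α j) (-z) with hM
  set φ : ℝ → ℝ := (Iio δ).indicator fun _ => 1 with hφ
  have hS : Sconv m 0 α ℓ = iterConv m
      fun j s => s ^ (-1 : ℝ) * wrightW (α j) 0 (-(ℓ j) * s ^ (-(α j))) := by
    simp only [Sconv, ite_self, zero_sub]
  have hf0 : ∀ i, ∀ x ≤ 0, f i x = 0 := fun i x hx =>
    indicator_of_notMem (fun h => hx.not_gt h.1) _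
  have hD : MeasurableSet {ζ : Fin (m + 1) → ℝ |
      (∀ i, 0 < ζ i) ∧ ∑ k, (ℓ k / ζ k) ^ (α k)⁻¹ < δ} := by
    refine MeasurableSet.inter ?_ (measurableSet_lt
      (f := fun ζ : Fin (m + 1) → ℝ => ∑ k, (ℓ k / ζ k) ^ (α k)⁻¹) (g := fun _ => δ)
      (by fun_prop) measurable_const)
    have hset : {ζ : Fin (m + 1) → ℝ | ∀ i, 0 < ζ i} = ⋂ i, {ζ | 0 < ζ i} := by
      ext ζ
      simp
    change MeasurableSet {ζ : Fin (m + 1) → ℝ | ∀ i, 0 < ζ i}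
    rw [hset]
    exact MeasurableSet.iInter fun i => measurableSet_lt measurable_const (by fun_prop)
  calc _ = ∫ s in Ioo 0 δ, iteratedPosConvolution m f s := by
        rw [integral_comp_sub_left (fun s => Sconv m 0 α ℓ s), sub_self, sub_sub_cancel,
          integral_of_le hδ0.le, integral_Ioc_eq_integral_Ioo, hS]
        exact setIntegral_congr_fun measurableSet_Ioo fun s hs =>
          iterConv_eq_iteratedPosConvolution m _ hs
    _ = ∫ s, iteratedPosConvolution m f s * φ s := by
        rw [← MeasureTheory.integral_indicator measurableSet_Ioo]
        congr 1
        ext s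
        by_cases h0 : 0 < s
        · by_cases h1 : s < δ
          · rw [hφ, indicator_of_mem (show s ∈ Ioo 0 δ from ⟨h0, h1⟩),
              indicator_of_mem (show s ∈ Iio δ from h1), mul_one]
          · rw [hφ, indicator_of_notMem fun h => h1 h.2,
              indicator_of_notMem (notMem_Iio.2 (not_lt.1 h1)), mul_zero]
        · rw [indicator_of_notMem fun h => h0 h.1,
            iteratedPosConvolution_eq_zero m f hf0 (not_lt.1 h0), zero_mul]
    _ = ∫ ζ : Fin (m + 1) → ℝ,
          (∏ i, M i (ζ i)) * φ (∑ i, (ℓ i / ζ i) ^ (α i)⁻¹) :=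
        integral_iteratedPosConvolution_mul m f M (fun i z => (ℓ i / z) ^ (α i)⁻¹)
          (fun i => integrable_indicator_inv_mul_wrightW_zero (hpos i) (hlt1 i) (hℓ i))
          (fun i => integrable_indicator_wrightW_one_sub (hpos i) (hlt1 i) (hℓ i) hδ0)
          (fun i => by fun_prop) hf0
          (fun i ψ => integral_indicator_inv_mul_wrightW_zero_mul (hpos i) (hℓ i) ψ)
          (measurable_const.indicator measurableSet_Iio) (C := 1) fun x =>
            (norm_indicator_le_norm_self _ _).trans_eq norm_one
    _ = _ := by
        rw [← MeasureTheory.integral_indicator hD]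
        congr 1
        ext ζ
        by_cases h0 : ∀ i, 0 < ζ i
        · by_cases h1 : ∑ k, (ℓ k / ζ k) ^ (α k)⁻¹ < δ
          · rw [indicator_of_mem (show ζ ∈ {ζ : Fin (m + 1) → ℝ |
                (∀ i, 0 < ζ i) ∧ ∑ k, (ℓ k / ζ k) ^ (α k)⁻¹ < δ} from ⟨h0, h1⟩), hφ,
              indicator_of_mem (mem_Iio.2 h1), mul_one]
            refine Finset.prod_congr rfl fun i _ => ?_
            refine indicator_of_mem (s := {z : ℝ | 0 < z ∧ (ℓ i / z) ^ (α i)⁻¹ < δ})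
              ⟨h0 i, lt_of_le_of_lt ?_ h1⟩ _
            exact Finset.single_le_sum (f := fun k => (ℓ k / ζ k) ^ (α k)⁻¹)
              (fun k _ => rpow_nonneg (div_nonneg (hℓ k).le (h0 k).le) _) (Finset.mem_univ i)
          · rw [indicator_of_notMem fun h => h1 h.2, hφ,
              indicator_of_notMem (notMem_Iio.2 (not_lt.1 h1)), mul_zero]
        · rw [indicator_of_notMem fun h => h0 h.1]
          obtain ⟨i, hi⟩ := not_forall.1 h0
          have hMi : M i (ζ i) = 0 := indicator_of_notMem (fun h => hi h.1) _
          rw [Finset.prod_eq_zero (Finset.mem_univ i) hMi, zero_mul]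
end

section
/- Positivity of the iterated convolution S⁰_m: For all positive parameters ℓ₁,…,ℓ_m > 0 and all t > 0, S⁰_m(t;−ℓ₁,…,−ℓ_m;−α₁,…,−α_m) > 0. -/
open MeasureTheory Real Filter Set Topology intervalIntegral

theorem eventually_mul_rpow_le {α : ℝ} (hα : α < 1) (a : ℝ) {c : ℝ} (hc : 0 < c) :
    ∀ᶠ r : ℝ in atTop, a * r ^ α ≤ c * r := by
  have h1 : Tendsto (fun r : ℝ => a * r ^ (-(1 - α))) atTop (𝓝 (a * 0)) :=
    (tendsto_rpow_neg_atTop (by linarith)).const_mul a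
  rw [mul_zero] at h1
  filter_upwards [h1.eventually (gt_mem_nhds hc), eventually_gt_atTop 0] with r hr hr0
  have h2 : r ^ α = r ^ (-(1 - α)) * r := by
    rw [← Real.rpow_add_one hr0.ne']; congr 1; ring
  rw [h2, ← mul_assoc]
  exact mul_le_mul_of_nonneg_right hr.le hr0.le

theorem integrableOn_exp_neg_add_mul_rpow {α : ℝ} (hα0 : 0 < α) (hα : α < 1) (a : ℝ) :
    IntegrableOn (fun r : ℝ => Real.exp (-r + a * r ^ α)) (Ioi 0) := by
  refine integrable_of_isBigO_exp_neg (b := 1 / 2) (by norm_num) ?_ ?_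
  · have : Continuous fun r : ℝ => r ^ α := Real.continuous_rpow_const hα0.le
    fun_prop
  · refine Asymptotics.IsBigO.of_bound 1 ?_
    filter_upwards [eventually_mul_rpow_le hα a (c := 1 / 2) (by norm_num)] with r hr
    rw [Real.norm_of_nonneg (Real.exp_pos _).le, Real.norm_of_nonneg (Real.exp_pos _).le, one_mul]
    exact Real.exp_le_exp.2 (by linarith)

theorem inv_Gamma_neg {x : ℝ} (hx : 0 ≤ x) :
    (Real.Gamma (-x))⁻¹ = -(Real.sin (π * x) * Real.Gamma (x + 1)) / π := by
  have h := Real.Gamma_mul_Gamma_one_sub (-x)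
  have hG : Real.Gamma (x + 1) ≠ 0 := (Real.Gamma_pos_of_pos (by linarith)).ne'
  have h2 : Real.Gamma (-x) = π / Real.sin (π * -x) / Real.Gamma (x + 1) := by
    rw [← h, show 1 - -x = x + 1 by ring]; field_simp
  rw [h2, mul_neg, Real.sin_neg]
  rw [inv_div, div_div_eq_mul_div]
  ring

/-- The integrand of the Hankel-type representation of `W(-z; -α, 0)` on the ray at angle `θ`. -/
noncomputable def rayIntegrand (α z θ r : ℝ) : ℂ :=
  Complex.exp (r * Complex.exp (θ * Complex.I)
    - z * (r ^ α : ℝ) * Complex.exp ((α * θ : ℝ) * Complex.I)) * Complex.exp (θ * Complex.I)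

theorem rayIntegrand_pi (α z r : ℝ) :
    rayIntegrand α z π r = -Complex.exp (-r + (-z * (r ^ α : ℝ) *
      Complex.exp ((α * π : ℝ) * Complex.I))) := by
  rw [rayIntegrand, Complex.exp_pi_mul_I]
  ring_nf

theorem norm_rayIntegrand (α z θ r : ℝ) :
    ‖rayIntegrand α z θ r‖ = Real.exp (r * Real.cos θ - z * r ^ α * Real.cos (α * θ)) := by
  rw [rayIntegrand, norm_mul, Complex.norm_exp_ofReal_mul_I, mul_one, Complex.norm_exp]
  congr 1
  rw [Complex.sub_re, Complex.re_ofReal_mul, ← Complex.ofReal_mul, Complex.re_ofReal_mul,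
    Complex.exp_ofReal_mul_I_re, Complex.exp_ofReal_mul_I_re]

theorem continuous_rayIntegrand {α : ℝ} (hα0 : 0 < α) (z θ : ℝ) :
    Continuous (rayIntegrand α z θ) := by
  have : Continuous fun r : ℝ => r ^ α := Real.continuous_rpow_const hα0.le
  unfold rayIntegrand
  fun_prop

theorem integrableOn_rayIntegrand_pi {α : ℝ} (hα0 : 0 < α) (hα : α < 1) (z : ℝ) :
    IntegrableOn (rayIntegrand α z π) (Ioi 0) := by
  refine (integrableOn_exp_neg_add_mul_rpow hα0 hα |z|).mono'
    (continuous_rayIntegrand hα0 z π).aestronglyMeasurable ?_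
  filter_upwards [ae_restrict_mem measurableSet_Ioi] with r hr
  rw [norm_rayIntegrand, Real.cos_pi]
  have h1 : 0 ≤ r ^ α := Real.rpow_nonneg (le_of_lt hr) _
  have h2 : -(z * Real.cos (α * π)) ≤ |z| := by
    refine (neg_le_abs _).trans ?_
    rw [abs_mul]
    exact mul_le_of_le_one_right (abs_nonneg _) (Real.abs_cos_le_one _)
  apply Real.exp_le_exp.2
  nlinarith [mul_le_mul_of_nonneg_right h2 h1]

theorem integral_exp_neg_mul_rpow_pow {α : ℝ} (hα0 : 0 < α) (k : ℕ) :
    ∫ r in Ioi (0 : ℝ), Real.exp (-r) * (r ^ α) ^ k = Real.Gamma (α * k + 1) := by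
  rw [Real.Gamma_eq_integral (by positivity)]
  refine setIntegral_congr_fun measurableSet_Ioi fun r hr => ?_
  have : 0 ≤ r := le_of_lt hr
  simp only [add_sub_cancel_right]
  rw [← Real.rpow_mul_natCast this]

theorem hasSum_complex_exp (w : ℂ) :
    HasSum (fun k : ℕ => w ^ k / k.factorial) (Complex.exp w) := by
  rw [Complex.exp_eq_exp_ℂ]
  exact NormedSpace.expSeries_div_hasSum_exp w

theorem hasSum_wright {α : ℝ} (hα0 : 0 < α) (hα : α < 1) (z : ℝ) :
    HasSum (fun k : ℕ => (-z) ^ k / (k.factorial * Real.Gamma (0 - α * k)))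
      ((∫ r in Ioi (0 : ℝ), rayIntegrand α z π r).im / π) := by
  set e : ℂ := Complex.exp ((α * π : ℝ) * Complex.I) with he
  have hcont : Continuous fun r : ℝ => r ^ α := Real.continuous_rpow_const hα0.le
  have hreal : ∀ x y : ℝ, HasSum (fun k : ℕ => Real.exp x * (y ^ k / k.factorial))
      (Real.exp (x + y)) := fun x y => by
    rw [Real.exp_add, Real.exp_eq_exp_ℝ]
    exact (NormedSpace.expSeries_div_hasSum_exp y).mul_left _
  have hne : ‖e‖ = 1 := Complex.norm_exp_ofReal_mul_I _
  have key := MeasureTheory.hasSum_integral_of_dominated_convergence (μ := volume.restrict (Ioi (0 : ℝ)))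
    (F := fun (k : ℕ) (r : ℝ) => -(Complex.exp (-r) * ((-z * (r ^ α : ℝ) * e) ^ k / k.factorial)))
    (f := rayIntegrand α z π)
    (fun k r => Real.exp (-r) * ((|z| * r ^ α) ^ k / k.factorial))
    (fun k => Continuous.aestronglyMeasurable (by fun_prop)) ?_ ?_ ?_ ?_
  · have h2 := (Complex.hasSum_im key).div_const π
    refine (congrArg (fun f : ℕ → ℝ => HasSum f _) (funext fun k => ?_)).mpr h2
    have h3 : ∀ r : ℝ, -(Complex.exp (-r) * ((-z * (r ^ α : ℝ) * e) ^ k / k.factorial))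
        = ((Real.exp (-r) * (r ^ α) ^ k : ℝ) : ℂ) * (-((-z) ^ k * e ^ k / k.factorial)) := by
      intro r; push_cast; ring
    have h4 : (e ^ k).im = Real.sin (π * (α * k)) := by
      rw [he, ← Complex.exp_nat_mul,
        show (k : ℂ) * (((α * π : ℝ) : ℂ) * Complex.I) = ((π * (α * k) : ℝ) : ℂ) * Complex.I by
          push_cast; ring, Complex.exp_ofReal_mul_I_im]
    simp_rw [h3]
    rw [MeasureTheory.integral_mul_const, integral_complex_ofReal, integral_exp_neg_mul_rpow_pow hα0,
      Complex.im_ofReal_mul, Complex.neg_im,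
      show ((-z : ℂ)) ^ k * e ^ k / k.factorial
        = (((-z) ^ k / k.factorial : ℝ) : ℂ) * e ^ k by push_cast; ring,
      Complex.im_ofReal_mul, h4, zero_sub, div_mul_eq_div_mul_one_div, one_div,
      inv_Gamma_neg (by positivity)]
    ring
  · intro k
    filter_upwards [ae_restrict_mem measurableSet_Ioi] with r hr
    have h1 : 0 ≤ r ^ α := Real.rpow_nonneg (le_of_lt hr) _
    rw [norm_neg, norm_mul, norm_div, norm_pow, norm_mul, norm_mul, hne, Complex.norm_exp]
    simp [abs_of_nonneg h1]
  · exact Eventually.of_forall fun r => (hreal _ _).summable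
  · refine (integrableOn_exp_neg_add_mul_rpow hα0 hα |z|).congr_fun (fun r _ => ?_)
      measurableSet_Ioi
    exact (hreal _ _).tsum_eq.symm
  · refine Eventually.of_forall fun r => ?_
    rw [rayIntegrand_pi, Complex.exp_add]
    exact ((hasSum_complex_exp _).mul_left _).neg

theorem wrightW_eq {α : ℝ} (hα0 : 0 < α) (hα : α < 1) (z : ℝ) :
    wrightW α 0 (-z) = (∫ r in Ioi (0 : ℝ), rayIntegrand α z π r).im / π :=
  (hasSum_wright hα0 hα z).tsum_eq

theorem measurable_wrightW {α : ℝ} (hα0 : 0 < α) (hα : α < 1) :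
    Measurable (wrightW α 0) := by
  refine measurable_of_tendsto_metrizable (f := fun (n : ℕ) (z : ℝ) =>
    ∑ k ∈ Finset.range n, z ^ k / (k.factorial * Real.Gamma (0 - α * k))) (fun n => ?_) ?_
  · exact Finset.measurable_sum _ fun k _ => by fun_prop
  · refine tendsto_pi_nhds.2 fun z => ?_
    have h := hasSum_wright hα0 hα (-z)
    rw [neg_neg] at h
    exact h.summable.hasSum.tendsto_sum_nat

/-- `s ↦ exp (s - z s ^ α)`, times `ds / dw`, in the logarithmic coordinate `s = exp w`. -/
noncomputable def logIntegrand (α z : ℝ) (w : ℂ) : ℂ :=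
  Complex.exp (Complex.exp w - z * Complex.exp (α * w) + w)

theorem differentiable_logIntegrand (α z : ℝ) : Differentiable ℂ (logIntegrand α z) := by
  unfold logIntegrand
  fun_prop

/-- `P` is a primitive of `logIntegrand α z` that is real on the real axis. -/
def IsLogPrimitive (α z : ℝ) (P : ℂ → ℂ) : Prop :=
  (∀ w, HasDerivAt P (logIntegrand α z w) w) ∧ ∀ x : ℝ, (P x).im = 0

theorem exists_isLogPrimitive (α z : ℝ) : ∃ P, IsLogPrimitive α z P := by
  obtain ⟨P, hP0, hP⟩ := (differentiable_logIntegrand α z).isExactOn_univ.with_val_at 0 0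
  have hP' : ∀ w, HasDerivAt P (logIntegrand α z w) w := fun w => hP w (Set.mem_univ w)
  refine ⟨P, hP', fun x => ?_⟩
  have hd : ∀ x : ℝ, HasDerivAt (fun x : ℝ => (P x).im) 0 x := fun x => by
    have h := (hP' x).comp_ofReal
    have h2 := Complex.imCLM.hasFDerivAt.comp_hasDerivAt x h
    have h3 : logIntegrand α z x
        = ((Real.exp (Real.exp x - z * Real.exp (α * x) + x) : ℝ) : ℂ) := by
      rw [logIntegrand]; push_cast; rfl
    rw [h3] at h2
    exact h2
  have := is_const_of_deriv_eq_zero (fun x => (hd x).differentiableAt) (fun x => (hd x).deriv) x 0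
  simpa [hP0] using this

theorem exp_real_add_mul_I (a x θ : ℝ) :
    Complex.exp (a * (x + θ * Complex.I))
      = (Real.exp (a * x) : ℝ) * Complex.exp ((a * θ : ℝ) * Complex.I) := by
  rw [Complex.ofReal_exp, ← Complex.exp_add]
  congr 1
  push_cast
  ring

theorem exp_add_mul_I (x θ : ℝ) :
    Complex.exp (x + θ * Complex.I) = (Real.exp x : ℝ) * Complex.exp (θ * Complex.I) := by
  simpa using exp_real_add_mul_I 1 x θ

theorem norm_logIntegrand (α z x θ : ℝ) :
    ‖logIntegrand α z (x + θ * Complex.I)‖ = Real.exp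
      (Real.exp x * Real.cos θ - z * Real.exp (α * x) * Real.cos (α * θ) + x) := by
  rw [logIntegrand, Complex.norm_exp, exp_real_add_mul_I, exp_add_mul_I]
  congr 1
  rw [Complex.add_re, Complex.sub_re, Complex.re_ofReal_mul, Complex.re_ofReal_mul,
    Complex.re_ofReal_mul, Complex.exp_ofReal_mul_I_re, Complex.exp_ofReal_mul_I_re]
  simp
  ring

namespace IsLogPrimitive

variable {α z : ℝ} {P : ℂ → ℂ}

theorem hasDerivAt_comp (hP : IsLogPrimitive α z P) {γ : ℝ → ℂ} {γ' : ℂ} {x : ℝ}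
    (hγ : HasDerivAt γ γ' x) : HasDerivAt (fun x => P (γ x)) (logIntegrand α z (γ x) * γ') x :=
  (hP.1 (γ x)).comp x hγ

theorem continuous (hP : IsLogPrimitive α z P) : Continuous P :=
  continuous_iff_continuousAt.2 fun w => (hP.1 w).continuousAt

theorem norm_sub_le (hP : IsLogPrimitive α z P) {x a b C : ℝ} (hab : a ≤ b)
    (hC : ∀ θ ∈ Icc a b, ‖logIntegrand α z (x + θ * Complex.I)‖ ≤ C) :
    ‖P (x + b * Complex.I) - P (x + a * Complex.I)‖ ≤ C * (b - a) := by
  have h := (convex_Icc a b).norm_image_sub_le_of_norm_hasDerivWithin_le (C := C)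
    (f := fun θ : ℝ => P (x + θ * Complex.I))
    (fun θ _ => (hP.hasDerivAt_comp (γ := fun θ : ℝ => (x : ℂ) + θ * Complex.I)
      (((hasDerivAt_id θ).ofReal_comp.mul_const Complex.I).const_add (x : ℂ))).hasDerivWithinAt)
    (fun θ hθ => ?_) (left_mem_Icc.2 hab) (right_mem_Icc.2 hab)
  · rwa [Real.norm_of_nonneg (sub_nonneg.2 hab)] at h
  · simpa using hC θ hθ

theorem tendsto_im_atBot (hP : IsLogPrimitive α z P) (hα : 0 < α) (hz : 0 ≤ z) {θ : ℝ}
    (hθ : 0 ≤ θ) :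
    Tendsto (fun x : ℝ => (P (x + θ * Complex.I)).im) atBot (𝓝 0) := by
  have hαx : Tendsto (fun x : ℝ => Real.exp (α * x)) atBot (𝓝 0) :=
    Real.tendsto_exp_atBot.comp (tendsto_id.const_mul_atBot hα)
  have hlim : Tendsto (fun x : ℝ => Real.exp (Real.exp x + z * Real.exp (α * x)) * Real.exp x * θ)
      atBot (𝓝 0) := by
    have := ((((Real.tendsto_exp_atBot.add (hαx.const_mul z)).rexp).mul
      Real.tendsto_exp_atBot).mul_const θ)
    simpa using this
  refine squeeze_zero_norm (fun x => ?_) hlim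
  have h := hP.norm_sub_le (x := x) (C := Real.exp (Real.exp x + z * Real.exp (α * x)) * Real.exp x)
    hθ (fun φ _ => ?_)
  · have h2 := (Complex.abs_im_le_norm _).trans h
    simpa [hP.2 x] using h2
  · rw [norm_logIntegrand, ← Real.exp_add]
    have h1 : 0 ≤ z * Real.exp (α * x) := mul_nonneg hz (Real.exp_pos _).le
    apply Real.exp_le_exp.2
    nlinarith [mul_le_mul_of_nonneg_left (Real.cos_le_one φ) (Real.exp_pos x).le,
      mul_le_mul_of_nonneg_left (Real.neg_one_le_cos (α * φ)) h1]

theorem norm_sub_pi_le (hP : IsLogPrimitive α z P) (hz : 0 ≤ z) {θ₀ : ℝ} (hθ₀ : 0 ≤ θ₀)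
    (x : ℝ) {θ : ℝ} (hθ : θ ∈ Icc θ₀ π) :
    ‖P (x + π * Complex.I) - P (x + θ * Complex.I)‖ ≤
      Real.exp (Real.cos θ₀ * Real.exp x + z * Real.exp x ^ α + x) * π := by
  refine (hP.norm_sub_le (x := x)
    (C := Real.exp (Real.cos θ₀ * Real.exp x + z * Real.exp x ^ α + x)) hθ.2
    (fun φ hφ => ?_)).trans ?_
  · rw [norm_logIntegrand, ← Real.exp_mul, mul_comm x α]
    have h1 : 0 ≤ z * Real.exp (α * x) := mul_nonneg hz (Real.exp_pos _).le
    have h2 : Real.cos φ ≤ Real.cos θ₀ :=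
      Real.cos_le_cos_of_nonneg_of_le_pi hθ₀ hφ.2 (hθ.1.trans hφ.1)
    apply Real.exp_le_exp.2
    nlinarith [mul_le_mul_of_nonneg_left h2 (Real.exp_pos x).le,
      mul_le_mul_of_nonneg_left (Real.neg_one_le_cos (α * φ)) h1]
  · have : 0 ≤ θ := hθ₀.trans hθ.1
    exact mul_le_mul_of_nonneg_left (by linarith) (Real.exp_pos _).le

theorem _root_.tendsto_exp_neg_mul_exp_add (hα : α < 1) (z : ℝ) {c : ℝ} (hc : c < 0) :
    Tendsto (fun x : ℝ => Real.exp (c * Real.exp x + z * Real.exp x ^ α + x) * π) atTop (𝓝 0) := by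
  have h := (tendsto_rpow_mul_exp_neg_mul_atTop_nhds_zero 1 (-c / 2) (by linarith)).comp
    Real.tendsto_exp_atTop
  have h2 : Tendsto (fun x : ℝ => Real.exp x * Real.exp (c / 2 * Real.exp x) * π) atTop (𝓝 0) := by
    have := h.mul_const π
    rw [zero_mul] at this
    refine this.congr fun x => ?_
    simp only [Function.comp, Real.rpow_one]
    congr 3
    ring
  refine squeeze_zero' (Eventually.of_forall fun x => by positivity) ?_ h2
  filter_upwards [Real.tendsto_exp_atTop.eventually
    (eventually_mul_rpow_le hα z (c := -c / 2) (by linarith))] with x hx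
  rw [← Real.exp_add]
  refine mul_le_mul_of_nonneg_right (Real.exp_le_exp.2 ?_) Real.pi_pos.le
  linarith

theorem _root_.logIntegrand_log (α z θ : ℝ) {r : ℝ} (hr : 0 < r) :
    logIntegrand α z (Real.log r + θ * Complex.I) * (r⁻¹ : ℝ) = rayIntegrand α z θ r := by
  have h0 : (r : ℂ) ≠ 0 := Complex.ofReal_ne_zero.2 hr.ne'
  rw [logIntegrand, Complex.exp_add, exp_real_add_mul_I, exp_add_mul_I, Real.exp_log hr,
    mul_comm α (Real.log r), Real.exp_mul, Real.exp_log hr, rayIntegrand]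
  push_cast
  rw [← mul_assoc]
  field_simp

theorem tendsto_ray (hP : IsLogPrimitive α z P) (hα : 0 < α) (hz : 0 ≤ z) {θ : ℝ}
    (hθ : 0 ≤ θ) (hint : IntegrableOn (rayIntegrand α z θ) (Ioi 0)) :
    Tendsto (fun x : ℝ => (P (x + θ * Complex.I)).im) atTop
      (𝓝 (∫ r in Ioi (0 : ℝ), rayIntegrand α z θ r).im) := by
  set g : ℝ → ℝ := fun r => (P (Real.log r + θ * Complex.I)).im with hg
  have hd : ∀ r ∈ Ioi (0 : ℝ), HasDerivAt (Function.update g 0 0) (rayIntegrand α z θ r).im r := by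
    intro r hr
    have h1 := hP.hasDerivAt_comp (γ := fun r : ℝ => (Real.log r : ℂ) + θ * Complex.I)
      ((Real.hasDerivAt_log (ne_of_gt hr)).ofReal_comp.add_const (θ * Complex.I))
    rw [logIntegrand_log α z θ hr] at h1
    have h2 := Complex.imCLM.hasFDerivAt.comp_hasDerivAt r h1
    refine HasDerivAt.congr_of_eventuallyEq h2 ?_
    filter_upwards [eventually_gt_nhds hr] with s hs
    rw [Function.update_of_ne (ne_of_gt hs)]
    rfl
  have hint' : IntegrableOn (fun r => (rayIntegrand α z θ r).im) (Ioi 0) := hint.im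
  have hc : ContinuousWithinAt (Function.update g 0 0) (Ici 0) 0 := by
    rw [continuousWithinAt_update_same, Ici_sdiff_left]
    exact (hP.tendsto_im_atBot hα hz hθ).comp Real.tendsto_log_nhdsGT_zero
  have hlim := tendsto_limUnder_of_hasDerivAt_of_integrableOn_Ioi hd hint'
  have hI := integral_Ioi_of_hasDerivAt_of_tendsto hc hd hint' hlim
  have him : ∫ r in Ioi (0 : ℝ), (rayIntegrand α z θ r).im
      = (∫ r in Ioi (0 : ℝ), rayIntegrand α z θ r).im := integral_im hint
  rw [Function.update_self, sub_zero, him] at hI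
  rw [← hI] at hlim
  refine (hlim.comp Real.tendsto_exp_atTop).congr fun x => ?_
  simp only [Function.comp]
  rw [Function.update_of_ne (Real.exp_pos x).ne', hg]
  simp only [Real.log_exp]

theorem tendsto_pi (hP : IsLogPrimitive α z P) (hα0 : 0 < α) (hα : α < 1) (hz : 0 ≤ z) :
    Tendsto (fun x : ℝ => (P (x + π * Complex.I)).im) atTop (𝓝 (π * wrightW α 0 (-z))) := by
  rw [wrightW_eq hα0 hα, mul_div_cancel₀ _ Real.pi_ne_zero]
  exact hP.tendsto_ray hα0 hz Real.pi_pos.le (integrableOn_rayIntegrand_pi hα0 hα z)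

end IsLogPrimitive

theorem exists_wrightW_le {α : ℝ} (hα0 : 0 < α) (hα : α < 1) :
    ∃ C, 0 ≤ C ∧ ∀ z, 0 < z → wrightW α 0 (-z) ≤ C * z ^ (-1 / α) := by
  set θ : ℝ := π / (1 + α) with hθ
  have hπ := Real.pi_pos
  have h1α : 0 < 1 + α := by linarith
  have hθeq : θ * (1 + α) = π := div_mul_cancel₀ _ h1α.ne'
  have hθ1 : π / 2 < θ := by nlinarith
  have hθ2 : θ ≤ π := by nlinarith
  have hcθ : Real.cos θ < 0 := Real.cos_neg_of_pi_div_two_lt_of_lt hθ1 (by linarith)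
  have hc : 0 < Real.cos (α * θ) :=
    Real.cos_pos_of_mem_Ioo ⟨by nlinarith, by nlinarith⟩
  set c := Real.cos (α * θ)
  refine ⟨c ^ (-1 / α) * Real.Gamma (1 / α + 1) / π, by positivity, fun z hz => ?_⟩
  obtain ⟨P, hP⟩ := exists_isLogPrimitive α z
  have hle : ∀ r ∈ Ioi (0 : ℝ),
      ‖rayIntegrand α z θ r‖ ≤ r ^ (0 : ℝ) * Real.exp (-(c * z) * r ^ α) := by
    intro r hr
    rw [norm_rayIntegrand, Real.rpow_zero, one_mul]
    have : r * Real.cos θ ≤ 0 := mul_nonpos_of_nonneg_of_nonpos (le_of_lt hr) hcθ.le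
    apply Real.exp_le_exp.2
    linarith
  have hint0 := integrableOn_rpow_mul_exp_neg_mul_rpow (s := 0) (by norm_num) hα0 (mul_pos hc hz)
  have hint : IntegrableOn (rayIntegrand α z θ) (Ioi 0) :=
    hint0.mono' (continuous_rayIntegrand hα0 z θ).aestronglyMeasurable
      ((ae_restrict_mem measurableSet_Ioi).mono hle)
  have hθ0 : 0 ≤ θ := by linarith
  have h1 := hP.tendsto_ray hα0 hz.le hθ0 hint
  have h2 := hP.tendsto_pi hα0 hα hz.le
  have h3 : Tendsto (fun x : ℝ => (P (x + π * Complex.I)).im - (P (x + θ * Complex.I)).im)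
      atTop (𝓝 0) := by
    refine squeeze_zero_norm (fun x => ?_) (tendsto_exp_neg_mul_exp_add hα z hcθ)
    rw [← Complex.sub_im]
    exact (Complex.abs_im_le_norm _).trans
      (hP.norm_sub_pi_le hz.le hθ0 x (left_mem_Icc.2 hθ2))
  have h4 := tendsto_nhds_unique (h2.sub h1) h3
  have h5 : (∫ r in Ioi (0 : ℝ), rayIntegrand α z θ r).im
      ≤ (c * z) ^ (-1 / α) * Real.Gamma (1 / α + 1) := by
    rw [← integral_exp_neg_mul_rpow hα0 (mul_pos hc hz)]
    refine (le_abs_self _).trans ((Complex.abs_im_le_norm _).trans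
      (norm_integral_le_of_norm_le ?_ ((ae_restrict_mem measurableSet_Ioi).mono ?_)))
    · simpa using hint0.integrable
    · simpa using hle
  rw [Real.mul_rpow hc.le hz.le] at h5
  have h6 : wrightW α 0 (-z) = (∫ r in Ioi (0 : ℝ), rayIntegrand α z θ r).im / π := by
    rw [eq_div_iff Real.pi_ne_zero]; linarith
  rw [h6, div_mul_eq_mul_div]
  exact div_le_div_of_nonneg_right (h5.trans_eq (by ring)) hπ.le

/-- The real part of the logarithmic steepest descent curve of `s ↦ s - z s ^ α`. -/
noncomputable def descentCurve (α z θ : ℝ) : ℝ :=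
  Real.log (z * Real.sin (α * θ) / Real.sin θ) / (1 - α)

section DescentCurve

variable {α z θ : ℝ}

theorem sin_mul_pos (hα0 : 0 < α) (hα : α < 1) (hθ0 : 0 < θ) (hθ : θ < π) :
    0 < Real.sin (α * θ) :=
  Real.sin_pos_of_pos_of_lt_pi (by positivity) (by nlinarith)

theorem exp_descentCurve_mul_sin (hα0 : 0 < α) (hα : α < 1) (hz : 0 < z) (hθ0 : 0 < θ)
    (hθ : θ < π) :
    Real.exp (descentCurve α z θ) * Real.sin θ
      = z * Real.exp (α * descentCurve α z θ) * Real.sin (α * θ) := by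
  have hs := Real.sin_pos_of_pos_of_lt_pi hθ0 hθ
  have hs' := sin_mul_pos hα0 hα hθ0 hθ
  have h1 : Real.exp (descentCurve α z θ)
      = Real.exp (α * descentCurve α z θ) * (z * Real.sin (α * θ) / Real.sin θ) := by
    conv_rhs => rw [← Real.exp_log (show 0 < z * Real.sin (α * θ) / Real.sin θ by positivity)]
    rw [← Real.exp_add]
    congr 1
    have : 1 - α ≠ 0 := by linarith
    rw [descentCurve]
    field_simp
    ring
  rw [h1]
  field_simp

theorem hasDerivAt_descentCurve (hα0 : 0 < α) (hα : α < 1) (hz : 0 < z) (hθ0 : 0 < θ)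
    (hθ : θ < π) :
    HasDerivAt (descentCurve α z)
      ((α * Real.cos (α * θ) / Real.sin (α * θ) - Real.cos θ / Real.sin θ) / (1 - α)) θ := by
  have hs := Real.sin_pos_of_pos_of_lt_pi hθ0 hθ
  have hs' := sin_mul_pos hα0 hα hθ0 hθ
  have h1 : HasDerivAt (fun θ => z * Real.sin (α * θ)) (z * (Real.cos (α * θ) * (α * 1))) θ :=
    (((hasDerivAt_id θ).const_mul α).sin).const_mul z
  have h2 := ((h1.div (Real.hasDerivAt_sin θ) hs.ne').log (div_pos (mul_pos hz hs') hs).ne').div_const (1 - α)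
  refine HasDerivAt.congr_deriv (f := descentCurve α z) h2 ?_
  simp only [Pi.div_apply]
  field_simp

theorem tendsto_descentCurve_zero (hα0 : 0 < α) (hz : 0 < z) :
    Tendsto (descentCurve α z) (𝓝[>] 0) (𝓝 (Real.log (z * α) / (1 - α))) := by
  have h : Tendsto (fun θ => z * α * Real.sinc (α * θ) / Real.sinc θ) (𝓝[>] 0) (𝓝 (z * α)) := by
    have h0 : ContinuousAt (fun θ => z * α * Real.sinc (α * θ) / Real.sinc θ) 0 := by
      refine ContinuousAt.div ?_ Real.continuous_sinc.continuousAt (by simp)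
      have := Real.continuous_sinc
      fun_prop
    have := h0.tendsto.mono_left (nhdsWithin_le_nhds (s := Ioi 0))
    simpa using this
  have h' := (h.log (by positivity)).div_const (1 - α)
  refine h'.congr' ?_
  filter_upwards [self_mem_nhdsWithin] with θ hθ
  have hθ' : θ ≠ 0 := ne_of_gt hθ
  rw [descentCurve, Real.sinc_of_ne_zero hθ', Real.sinc_of_ne_zero (mul_ne_zero hα0.ne' hθ')]
  congr 2
  field_simp

theorem tendsto_descentCurve_pi (hα0 : 0 < α) (hα : α < 1) (hz : 0 < z) :
    Tendsto (descentCurve α z) (𝓝[<] π) atTop := by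
  have hsin : Tendsto Real.sin (𝓝[<] π) (𝓝[>] 0) := by
    refine tendsto_nhdsWithin_iff.2 ⟨?_, ?_⟩
    · have := (Real.continuous_sin.tendsto π).mono_left (nhdsWithin_le_nhds (s := Iio π))
      rwa [Real.sin_pi] at this
    · filter_upwards [Ioo_mem_nhdsLT Real.pi_pos] with θ hθ
      exact Real.sin_pos_of_mem_Ioo hθ
  have hnum : Tendsto (fun θ => z * Real.sin (α * θ)) (𝓝[<] π) (𝓝 (z * Real.sin (α * π))) :=
    ((by fun_prop : Continuous fun θ => z * Real.sin (α * θ)).tendsto π).mono_left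
      nhdsWithin_le_nhds
  have hpos : 0 < z * Real.sin (α * π) := by
    have := Real.pi_pos
    exact mul_pos hz (Real.sin_pos_of_pos_of_lt_pi (by positivity) (by nlinarith))
  refine (Real.tendsto_log_atTop.comp ?_).atTop_div_const (by linarith)
  exact hnum.pos_mul_atTop hpos (tendsto_inv_nhdsGT_zero.comp hsin)

end DescentCurve

theorem IsLogPrimitive.hasDerivAt_im_descentCurve {α z : ℝ} {P : ℂ → ℂ}
    (hP : IsLogPrimitive α z P) (hα0 : 0 < α) (hα : α < 1) (hz : 0 < z) {θ : ℝ} (hθ0 : 0 < θ)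
    (hθ : θ < π) :
    ∃ d, 0 < d ∧ HasDerivAt (fun θ : ℝ => (P (descentCurve α z θ + θ * Complex.I)).im) d θ := by
  have hs := Real.sin_pos_of_pos_of_lt_pi hθ0 hθ
  have hs' := sin_mul_pos hα0 hα hθ0 hθ
  set X := descentCurve α z θ with hX
  set X' := (α * Real.cos (α * θ) / Real.sin (α * θ) - Real.cos θ / Real.sin θ) / (1 - α) with hX'
  have hγ : HasDerivAt (fun θ : ℝ => (descentCurve α z θ : ℂ) + θ * Complex.I)
      (X' + 1 * Complex.I) θ :=
    (hasDerivAt_descentCurve hα0 hα hz hθ0 hθ).ofReal_comp.add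
      ((hasDerivAt_id θ).ofReal_comp.mul_const Complex.I)
  have h := Complex.imCLM.hasFDerivAt.comp_hasDerivAt θ (hP.hasDerivAt_comp hγ)
  refine ⟨_, ?_, h⟩
  have hphase : Complex.exp (X + θ * Complex.I) - z * Complex.exp (α * (X + θ * Complex.I))
      = ((Real.exp X * Real.cos θ - z * Real.exp (α * X) * Real.cos (α * θ) : ℝ) : ℂ) := by
    have hid := exp_descentCurve_mul_sin hα0 hα hz hθ0 hθ
    rw [exp_real_add_mul_I, exp_add_mul_I]
    apply Complex.ext
    · simp only [Complex.sub_re, Complex.re_ofReal_mul, Complex.exp_ofReal_mul_I_re,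
        Complex.ofReal_re]
      ring
    · simp only [Complex.sub_im, Complex.im_ofReal_mul, Complex.exp_ofReal_mul_I_im,
        Complex.ofReal_im]
      linarith
  have hval : logIntegrand α z (X + θ * Complex.I) * (X' + 1 * Complex.I)
      = ((Real.exp (Real.exp X * Real.cos θ - z * Real.exp (α * X) * Real.cos (α * θ))
          * Real.exp X : ℝ) : ℂ) * (Complex.exp (θ * Complex.I) * (X' + 1 * Complex.I)) := by
    rw [logIntegrand, Complex.exp_add, hphase, exp_add_mul_I]
    push_cast
    ring
  have him : (Complex.exp (θ * Complex.I) * (X' + 1 * Complex.I)).im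
      = Real.sin θ * X' + Real.cos θ := by
    rw [Complex.mul_im, Complex.exp_ofReal_mul_I_im, Complex.exp_ofReal_mul_I_re]
    simp
    ring
  change 0 < (logIntegrand α z (X + θ * Complex.I) * (X' + 1 * Complex.I)).im
  rw [hval, Complex.im_ofReal_mul, him]
  have h1α : 0 < 1 - α := by linarith
  have hdiff : 0 < Real.sin ((1 - α) * θ) := sin_mul_pos h1α (by linarith) hθ0 hθ
  have hsub : Real.sin ((1 - α) * θ)
      = Real.sin θ * Real.cos (α * θ) - Real.cos θ * Real.sin (α * θ) := by
    rw [← Real.sin_sub]; congr 1; ring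
  have hfin : Real.sin θ * X' + Real.cos θ
      = α * Real.sin ((1 - α) * θ) / (Real.sin (α * θ) * (1 - α)) := by
    rw [hsub, hX']
    field_simp
    ring
  rw [hfin]
  positivity

theorem wrightW_pos {α : ℝ} (hα0 : 0 < α) (hα : α < 1) {z : ℝ} (hz : 0 < z) :
    0 < wrightW α 0 (-z) := by
  obtain ⟨P, hP⟩ := exists_isLogPrimitive α z
  have hπ := Real.pi_pos
  set Q : ℝ → ℝ := fun θ => (P (descentCurve α z θ + θ * Complex.I)).im with hQ
  have hmono : StrictMonoOn Q (Ioo 0 π) := by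
    refine strictMonoOn_of_deriv_pos (convex_Ioo _ _) (fun θ hθ => ?_) (fun θ hθ => ?_)
    · obtain ⟨d, _, h⟩ := hP.hasDerivAt_im_descentCurve hα0 hα hz hθ.1 hθ.2
      exact h.continuousAt.continuousWithinAt
    · rw [interior_Ioo] at hθ
      obtain ⟨d, hd, h⟩ := hP.hasDerivAt_im_descentCurve hα0 hα hz hθ.1 hθ.2
      rwa [h.deriv]
  have h0 : Tendsto Q (𝓝[>] 0) (𝓝 0) := by
    have hid : Tendsto (fun θ : ℝ => (θ : ℂ) * Complex.I) (𝓝[>] 0) (𝓝 0) := by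
      have : Continuous fun θ : ℝ => (θ : ℂ) * Complex.I := by fun_prop
      simpa using (this.tendsto 0).mono_left nhdsWithin_le_nhds
    have h1 := ((Complex.continuous_ofReal.tendsto _).comp
      (tendsto_descentCurve_zero hα0 hz)).add hid
    have h2 := ((Complex.continuous_im.comp hP.continuous).tendsto _).comp h1
    simp only [add_zero, Function.comp_def, hP.2] at h2
    exact h2
  have h1 : Tendsto Q (𝓝[<] π) (𝓝 (π * wrightW α 0 (-z))) := by
    have hX := tendsto_descentCurve_pi hα0 hα hz
    have h2 := (hP.tendsto_pi hα0 hα hz.le).comp hX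
    have hc : Real.cos (3 * π / 4) < 0 :=
      Real.cos_neg_of_pi_div_two_lt_of_lt (by linarith) (by linarith)
    have h3 := (tendsto_exp_neg_mul_exp_add hα z hc).comp hX
    have h4 : Tendsto (fun θ => (P (descentCurve α z θ + π * Complex.I)).im - Q θ)
        (𝓝[<] π) (𝓝 0) := by
      refine squeeze_zero_norm' ?_ h3
      filter_upwards [Ioo_mem_nhdsLT (show 3 * π / 4 < π by linarith)] with θ hθ
      rw [hQ, ← Complex.sub_im]
      exact (Complex.abs_im_le_norm _).trans
        (hP.norm_sub_pi_le hz.le (by linarith) _ ⟨hθ.1.le, hθ.2.le⟩)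
    have h5 := h2.sub h4
    rw [sub_zero] at h5
    exact h5.congr fun θ => sub_sub_cancel _ _
  have hlow : 0 ≤ Q (π / 4) := by
    refine le_of_tendsto h0 ?_
    filter_upwards [Ioo_mem_nhdsGT (show 0 < π / 4 by linarith)] with θ hθ
    exact (hmono ⟨hθ.1, by linarith [hθ.2]⟩ ⟨by linarith, by linarith⟩ hθ.2).le
  have hmid : Q (π / 4) < Q (π / 2) :=
    hmono ⟨by linarith, by linarith⟩ ⟨by linarith, by linarith⟩ (by linarith)
  have hup : Q (π / 2) ≤ π * wrightW α 0 (-z) := by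
    refine ge_of_tendsto h1 ?_
    filter_upwards [Ioo_mem_nhdsLT (show π / 2 < π by linarith)] with θ hθ
    exact (hmono ⟨by linarith, by linarith⟩ ⟨by linarith [hθ.1], hθ.2⟩ hθ.1).le
  exact pos_of_mul_pos_right (by linarith) hπ.le

/-- Measurable functions that are positive on `(0, ∞)` and bounded above on each `(0, T]`. -/
structure IsPosLocBdd (f : ℝ → ℝ) : Prop where
  measurable : Measurable f
  pos : ∀ t, 0 < t → 0 < f t
  le : ∀ T, ∃ C, ∀ t, 0 < t → t ≤ T → f t ≤ C

theorem IsPosLocBdd.laplaceConv {f g : ℝ → ℝ} (hf : IsPosLocBdd f) (hg : IsPosLocBdd g) :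
    IsPosLocBdd (laplaceConv f g) := by
  have hmeas2 : Measurable fun p : ℝ × ℝ => f p.2 * g (p.1 - p.2) :=
    (hf.measurable.comp measurable_snd).mul (hg.measurable.comp (measurable_fst.sub measurable_snd))
  have hbound : ∀ T, ∃ C, 0 ≤ C ∧ ∀ t, t ≤ T → ∀ τ ∈ Ioo 0 t, ‖f τ * g (t - τ)‖ ≤ C := by
    intro T
    obtain ⟨A, hA⟩ := hf.le T
    obtain ⟨B, hB⟩ := hg.le T
    refine ⟨|A| * |B|, by positivity, fun t ht τ hτ => ?_⟩
    have h1 := hf.pos τ hτ.1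
    have h2 := hg.pos (t - τ) (sub_pos.2 hτ.2)
    rw [Real.norm_of_nonneg (mul_pos h1 h2).le]
    exact mul_le_mul ((hA τ hτ.1 (hτ.2.le.trans ht)).trans (le_abs_self A))
      ((hB (t - τ) (sub_pos.2 hτ.2) (by linarith [hτ.1])).trans (le_abs_self B)) h2.le
      (abs_nonneg A)
  refine ⟨?_, fun t ht => ?_, fun T => ?_⟩
  · have hset : ∀ F : ℝ × ℝ → Prop, MeasurableSet {p | F p} →
        Measurable fun t => ∫ τ, {p | F p}.indicator (fun p => f p.2 * g (p.1 - p.2)) (t, τ) :=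
      fun F hF => (StronglyMeasurable.integral_prod_right
        (f := fun t τ => {p | F p}.indicator (fun p => f p.2 * g (p.1 - p.2)) (t, τ))
        (hmeas2.indicator hF).stronglyMeasurable).measurable
    have h1 := hset (fun p => p.2 ∈ Ioc 0 p.1)
      ((measurableSet_lt measurable_const measurable_snd).inter
        (measurableSet_le measurable_snd measurable_fst))
    have h2 := hset (fun p => p.2 ∈ Ioc p.1 0)
      ((measurableSet_lt measurable_fst measurable_snd).inter
        (measurableSet_le measurable_snd measurable_const))
    convert h1.sub h2 using 1
    ext t
    simp only [_root_.laplaceConv, intervalIntegral, ← MeasureTheory.integral_indicator measurableSet_Ioc]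
    rfl
  · obtain ⟨C, _, hC⟩ := hbound t
    refine intervalIntegral.intervalIntegral_pos_of_pos_on ?_ (fun τ hτ =>
      mul_pos (hf.pos τ hτ.1) (hg.pos _ (sub_pos.2 hτ.2))) ht
    rw [intervalIntegrable_iff_integrableOn_Ioo_of_le ht.le]
    refine Measure.integrableOn_of_bounded (M := C) (by simp)
      (hmeas2.comp measurable_prodMk_left).aestronglyMeasurable ?_
    filter_upwards [ae_restrict_mem measurableSet_Ioo] with τ hτ using hC t le_rfl τ hτ
  · obtain ⟨C, hC0, hC⟩ := hbound T
    refine ⟨C * T, fun t ht htT => ?_⟩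
    have h : ‖∫ τ in (0 : ℝ)..t, f τ * g (t - τ)‖ ≤ C * |t - 0| := by
      refine intervalIntegral.norm_integral_le_of_norm_le_const_ae ?_
      have hne : ∀ᵐ τ : ℝ, τ ≠ t := by simp [ae_iff]
      filter_upwards [hne] with τ hτ hτ'
      rw [uIoc_of_le ht.le] at hτ'
      exact hC t htT τ ⟨hτ'.1, lt_of_le_of_ne hτ'.2 hτ⟩
    rw [sub_zero, abs_of_pos ht] at h
    exact (le_abs_self _).trans (h.trans (mul_le_mul_of_nonneg_left htT hC0))

theorem isPosLocBdd_iterConv : ∀ (n : ℕ) (h : Fin (n + 1) → ℝ → ℝ),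
    (∀ j, IsPosLocBdd (h j)) → IsPosLocBdd (iterConv n h)
  | 0, _, hh => hh 0
  | n + 1, _, hh => (isPosLocBdd_iterConv n _ fun i => hh i.castSucc).laplaceConv (hh (Fin.last _))

theorem isPosLocBdd_wright {α ℓ : ℝ} (hα0 : 0 < α) (hα : α < 1) (hℓ : 0 < ℓ) :
    IsPosLocBdd fun t => t ^ ((0 : ℝ) - 1) * wrightW α 0 (-ℓ * t ^ (-α)) := by
  refine ⟨?_, fun t ht => ?_, fun T => ?_⟩
  · exact (measurable_id.pow_const _).mul
      ((measurable_wrightW hα0 hα).comp ((measurable_id.pow_const _).const_mul _))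
  · rw [neg_mul]
    have := wrightW_pos hα0 hα (z := ℓ * t ^ (-α)) (by positivity)
    positivity
  · obtain ⟨C, hC0, hC⟩ := exists_wrightW_le hα0 hα
    refine ⟨C * ℓ ^ (-1 / α), fun t ht _ => ?_⟩
    have h := hC (ℓ * t ^ (-α)) (by positivity)
    have h2 : (t ^ (-α)) ^ (-1 / α) = t := by
      rw [← Real.rpow_mul ht.le, show -α * (-1 / α) = 1 by field_simp, Real.rpow_one]
    rw [Real.mul_rpow hℓ.le (by positivity), h2] at h
    rw [neg_mul, zero_sub, Real.rpow_neg_one]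
    calc t⁻¹ * wrightW α 0 (-(ℓ * t ^ (-α))) ≤ t⁻¹ * (C * (ℓ ^ (-1 / α) * t)) :=
          mul_le_mul_of_nonneg_left h (by positivity)
      _ = C * ℓ ^ (-1 / α) := by field_simp

/-- Positivity of the iterated convolution `S⁰_m`. -/
theorem Sconv_pos
    (m : ℕ) (α : Fin (m + 1) → ℝ)
    (hmono : StrictMono α) (hpos : ∀ j, 0 < α j) (hlt1 : ∀ j, α j < 1)
    (ℓ : Fin (m + 1) → ℝ) (hℓ : ∀ j, 0 < ℓ j)
    (t : ℝ) (ht : 0 < t) :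
    0 < Sconv m 0 α ℓ t := by
  refine (isPosLocBdd_iterConv m _ fun j => ?_).pos t ht
  simpa only [ite_self] using isPosLocBdd_wright (hpos j) (hlt1 j) (hℓ j)
end
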